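/- arXiv:2605.22194 — 7 statements merged into one kernel-verified Lean document; each statement's English description precedes it below -/
import Mathlib

section
/- Let q be a prime power, h, k ≥ 1, and let v ∈ F_{q^h}^k be a nonzero vector. Then the set I = { i ∈ Z/hZ : v^{(q^i)} ∈ ⟨v⟩_{F_{q^h}} }, where v^{(q^i)} denotes the entrywise q^i-th power of v and ⟨v⟩_{F_{q^h}} is the F_{q^h}-span of v, is an additive subgroup of Z/hZ; in particular, |I| divides h. -/
/-!
If `x ^ q ^ m = c • x` and `x ^ q ^ n = d • x`, then raising the first identity to the power `q ^ n`
gives `x ^ q ^ (m + n) = (c ^ q ^ n * d) • x`, so the exponents `n` with `x ^ q ^ n ∈ ⟨x⟩` are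
closed under addition. When `x ^ q ^ h = x` only the residue of `n` modulo `h` matters, and these
residues form a subgroup of `ℤ/hℤ` because a submonoid of a finite group is closed under inverses.
-/

theorem pow_pow_mod_of_pow_pow_eq_self {M : Type*} [Monoid M] {q h : ℕ} {x : M}
    (hx : x ^ q ^ h = x) (n : ℕ) : x ^ q ^ (n % h) = x ^ q ^ n := by
  have periodic : Function.IsPeriodicPt (fun y : M ↦ y ^ q) h x := by
    simpa only [Function.IsPeriodicPt, Function.IsFixedPt, pow_iterate] using hx
  simpa only [pow_iterate] using periodic.iterate_mod_apply n

theorem neg_mem_of_mem_addSubmonoid_of_finite {G : Type*} [AddGroup G] [Finite G]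
    (S : AddSubmonoid G) {a : G} (ha : a ∈ S) : -a ∈ S := by
  have neg_mem_multiples : -a ∈ AddSubmonoid.multiples a :=
    mem_multiples_iff_mem_zmultiples.mpr (neg_mem (AddSubgroup.mem_zmultiples a))
  exact AddSubmonoid.multiples_le.mpr ha neg_mem_multiples

section Algebra

variable (R : Type*) {A : Type*} [CommSemiring R] [Semiring A] [Algebra R A] {q h : ℕ} {x : A}

theorem pow_pow_add_mem_span_singleton {m n : ℕ}
    (hm : x ^ q ^ m ∈ Submodule.span R {x}) (hn : x ^ q ^ n ∈ Submodule.span R {x}) :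
    x ^ q ^ (m + n) ∈ Submodule.span R {x} := by
  obtain ⟨c, hc⟩ := Submodule.mem_span_singleton.mp hm
  have pow_add_eq : x ^ q ^ (m + n) = c ^ q ^ n • x ^ q ^ n := by
    rw [pow_add, pow_mul, ← hc, smul_pow]
  rw [pow_add_eq]
  exact Submodule.smul_mem _ _ hn

/-- The residues `i` modulo `h` with `x ^ q ^ i ∈ ⟨x⟩`, as a submonoid of `ℤ/hℤ`. A residue is
represented by `i.val`; by `hx` any other natural representative gives the same power. -/
def spanPowAddSubmonoid [NeZero h] (hx : x ^ q ^ h = x) : AddSubmonoid (ZMod h) where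
  carrier := {i | x ^ q ^ i.val ∈ Submodule.span R {x}}
  zero_mem' := by simp [Submodule.mem_span_singleton_self]
  add_mem' {i j} hi hj := by
    rw [Set.mem_ofPred_eq, ZMod.val_add, pow_pow_mod_of_pow_pow_eq_self hx]
    exact pow_pow_add_mem_span_singleton R hi hj

/-- The subgroup of `ℤ/hℤ` underlying `spanPowAddSubmonoid`. For `x` a vector over `F_{q^h}` in the
algebra of vectors with entrywise product, it is the set `I` of the theorem. -/
def spanPowAddSubgroup [NeZero h] (hx : x ^ q ^ h = x) : AddSubgroup (ZMod h) where
  toAddSubmonoid := spanPowAddSubmonoid R hx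
  neg_mem' := neg_mem_of_mem_addSubmonoid_of_finite (spanPowAddSubmonoid R hx)

theorem stmt5_general [NeZero h] (hx : x ^ q ^ h = x) :
    (∃ G : AddSubgroup (ZMod h),
      (G : Set (ZMod h)) = {i : ZMod h | x ^ q ^ i.val ∈ Submodule.span R {x}}) ∧
    {i : ZMod h | x ^ q ^ i.val ∈ Submodule.span R {x}}.ncard ∣ h := by
  refine ⟨⟨spanPowAddSubgroup R hx, rfl⟩, ?_⟩
  have card_dvd := (spanPowAddSubgroup R hx).card_addSubgroup_dvd_card
  rwa [Nat.card_zmod] at card_dvd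

end Algebra

/-- Let `q` be a prime power and `v ∈ F_{q^h}^k` a nonzero vector.
The set `I = {i ∈ ℤ/hℤ : v^{(q^i)} ∈ ⟨v⟩}` (where `v^{(q^i)}` is the entrywise
`q^i`-th power of `v`) is an additive subgroup of `ℤ/hℤ`; in particular its
cardinality divides `h`. -/
theorem stmt5 (q h k : ℕ) (hq : IsPrimePow q) (hh : 1 ≤ h) (hk : 1 ≤ k)
    (E : Type) [Field E] [Fintype E] (hcard : Fintype.card E = q ^ h)
    (v : Fin k → E) (hv : v ≠ 0) :
    (∃ G : AddSubgroup (ZMod h),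
      (G : Set (ZMod h)) =
        {i : ZMod h | (fun j => v j ^ q ^ i.val) ∈ Submodule.span E {v}}) ∧
    {i : ZMod h | (fun j => v j ^ q ^ i.val) ∈ Submodule.span E {v}}.ncard ∣ h := by
  have : NeZero h := .of_pos hh
  exact stmt5_general E (funext fun j ↦ hcard ▸ FiniteField.pow_card (v j))
end

section
/- Let q be a prime power, k, h ≥ 2, and let V be a kh-dimensional vector space over F_q. Let {Σ₁,...,Σ_{k+1}} be a pseudo-arc of PG(kh-1,q) of size k+1, i.e. k+1 h-dimensional F_q-subspaces of V any k of which span V. Then there exist an F_q-linear isomorphism φ : V → M_{k×h}(F_q) and nonzero vectors x₁,...,x_{k+1} ∈ F_q^k such that φ(Σ_i) = { x_i yᵀ : y ∈ F_q^h } for each i = 1,...,k+1. Moreover, the resulting Segre variety is unique: the subset φ^{-1}({ M ∈ M_{k×h}(F_q) : rank M = 1 }) of V does not depend on the choice of such an isomorphism φ. -/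
/-- The set of `k × h` matrices of the form `x yᵀ` for a fixed column `x` and an
arbitrary row `y`; for `x ≠ 0` this is a member of the `(h-1)`-regulus of the
standard Segre variety. -/
def blockSet {F : Type} [Field F] {k h : ℕ} (x : Fin k → F) :
    Set (Matrix (Fin k) (Fin h) F) :=
  {M | ∃ y : Fin h → F, M = Matrix.vecMulVec x y}

/-!
Both halves come from the space of relations `N = {(f₁, …, f_{k+1}) : fᵢ ∈ Σᵢ, ∑ fᵢ = 0}`. Any `k`
of the `Σᵢ` span `V` with no room to spare, so each projection `N → Σᵢ` is an isomorphism.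

For existence, identify `N` with `F ^ h` and let `pᵢ : F ^ h ≃ Σᵢ` be the projections. The map
sending a matrix with rows `y₁, …, y_k` to `p₁ y₁ + ⋯ + p_k y_k` is an isomorphism onto `V`. It
carries `eᵢ yᵀ` to `pᵢ y` and, since `∑ pᵢ = 0`, it carries `-(e₁ + ⋯ + e_k) yᵀ` to `p_{k+1} y`.

For uniqueness, the rank-one vectors are exactly the nonzero `∑ aᵢ fᵢ` with `f ∈ N` and scalars
`aᵢ`, a description that involves only the `Σᵢ`. Indeed, when `Σᵢ = {xᵢ yᵀ}`, the vectors `xᵢ`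
satisfy a single relation `∑ lᵢ xᵢ = 0` up to scalars, with all `lᵢ ≠ 0`. Hence every element of `N`
has the form `fᵢ = lᵢ xᵢ zᵀ`, and `∑ aᵢ fᵢ = (∑ aᵢ lᵢ xᵢ) zᵀ`, where the first factor is arbitrary.
-/

section Relations

variable {K ι W : Type*} {U : ι → Type*} [DivisionRing K] [Fintype ι] [AddCommGroup W] [Module K W]
  [∀ i, AddCommGroup (U i)] [∀ i, Module K (U i)] {g : ∀ i, U i →ₗ[K] W} {i : ι}

/-- The space of linear relations `∑ i, g i (u i) = 0` between the images of the maps `g i`. -/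
def relationSpace (g : ∀ i, U i →ₗ[K] W) : Submodule K (∀ i, U i) :=
  LinearMap.ker (∑ i, g i ∘ₗ LinearMap.proj i)

theorem mem_relationSpace {u : ∀ i, U i} : u ∈ relationSpace g ↔ ∑ i, g i (u i) = 0 := by
  simp [relationSpace]

theorem exists_sum_eq_of_iSup_range_eq_top (hg : ⨆ j ≠ i, LinearMap.range (g j) = ⊤) (w : W) :
    ∃ u : ∀ j, U j, u i = 0 ∧ ∑ j, g j (u j) = w := by
  classical
  have range_le : ⨆ j ≠ i, LinearMap.range (g j) ≤
      (LinearMap.ker (LinearMap.proj (R := K) (φ := U) i)).map (∑ j, g j ∘ₗ LinearMap.proj j) := by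
    refine iSup₂_le fun j hj => ?_
    rintro _ ⟨a, rfl⟩
    refine ⟨Pi.single j a, by simp [Pi.single_eq_of_ne hj.symm], ?_⟩
    simp [LinearMap.apply_single]
  obtain ⟨u, hu, hw⟩ := range_le (hg ▸ Submodule.mem_top (x := w))
  exact ⟨u, hu, by simpa using hw⟩

theorem finrank_relationSpace_add [∀ i, FiniteDimensional K (U i)]
    (hg : ⨆ j ≠ i, LinearMap.range (g j) = ⊤) :
    Module.finrank K (relationSpace g) + Module.finrank K W = ∑ j, Module.finrank K (U j) := by
  let sumMap : (∀ j, U j) →ₗ[K] W := ∑ j, g j ∘ₗ LinearMap.proj j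
  have hsurj : Function.Surjective sumMap := fun w =>
    (exists_sum_eq_of_iSup_range_eq_top hg w).imp fun u hu => by simpa [sumMap] using hu.2
  rw [← Module.finrank_pi_fintype, ← sumMap.finrank_range_add_finrank_ker,
    LinearMap.range_eq_top.2 hsurj, finrank_top, add_comm, relationSpace]

theorem surjective_proj_relationSpace (hg : ⨆ j ≠ i, LinearMap.range (g j) = ⊤) :
    Function.Surjective (LinearMap.proj i ∘ₗ (relationSpace g).subtype) := by
  classical
  intro a
  obtain ⟨u, hui, hu⟩ := exists_sum_eq_of_iSup_range_eq_top hg (-g i a)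
  have hmem : u + Pi.single i a ∈ relationSpace g := by
    simp [mem_relationSpace, Finset.sum_add_distrib, hu, LinearMap.apply_single]
  exact ⟨⟨_, hmem⟩, by simp [hui]⟩

/-- If the maps other than `g i` span `W`, with `dim W = ∑ j ≠ i, dim (U j)`, then a relation is
determined by its `i`-th term, which can be prescribed. -/
noncomputable def relationSpaceEquiv [∀ i, FiniteDimensional K (U i)]
    (hg : ⨆ j ≠ i, LinearMap.range (g j) = ⊤)
    (hdim : ∑ j, Module.finrank K (U j) = Module.finrank K (U i) + Module.finrank K W) :
    relationSpace g ≃ₗ[K] U i :=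
  have hsurj := surjective_proj_relationSpace hg
  have hfinrank : Module.finrank K (relationSpace g) = Module.finrank K (U i) :=
    Nat.add_right_cancel ((finrank_relationSpace_add hg).trans hdim)
  LinearEquiv.ofBijective _
    ⟨(LinearMap.injective_iff_surjective_of_finrank_eq_finrank hfinrank).2 hsurj, hsurj⟩

@[simp]
theorem relationSpaceEquiv_apply [∀ i, FiniteDimensional K (U i)]
    (hg : ⨆ j ≠ i, LinearMap.range (g j) = ⊤)
    (hdim : ∑ j, Module.finrank K (U j) = Module.finrank K (U i) + Module.finrank K W)
    (u : relationSpace g) : relationSpaceEquiv hg hdim u = u.1 i :=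
  rfl

theorem exists_ne_zero_sum_smul_eq_zero_iff {x : ι → W}
    (hx : ∀ i, ⨆ j ≠ i, Submodule.span K {x j} = ⊤)
    (hcard : Fintype.card ι = 1 + Module.finrank K W) :
    ∃ l : ι → K, (∀ i, l i ≠ 0) ∧
      ∀ a : ι → K, ∑ i, a i • x i = 0 ↔ ∃ c : K, a = c • l := by
  let g : ι → K →ₗ[K] W := fun j => LinearMap.toSpanSingleton K W (x j)
  have hg (i : ι) : ⨆ j ≠ i, LinearMap.range (g j) = ⊤ := by
    simpa only [g, LinearMap.range_toSpanSingleton] using hx i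
  let e (i : ι) : relationSpace g ≃ₗ[K] K := relationSpaceEquiv (hg i) (by simpa using hcard)
  have mem_iff (a : ι → K) : a ∈ relationSpace g ↔ ∑ i, a i • x i = 0 := by
    simp [mem_relationSpace, g]
  obtain ⟨i₀⟩ : Nonempty ι := Fintype.card_pos_iff.1 (by lia)
  let l : relationSpace g := (e i₀).symm 1
  have hl : l ≠ 0 := by simp [l]
  refine ⟨l, fun i hi => hl ((e i).injective (by simpa [e] using hi)), fun a => ?_⟩
  rw [← mem_iff]
  constructor
  · intro ha
    have heq : (⟨a, ha⟩ : relationSpace g) = a i₀ • l :=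
      (e i₀).injective (by rw [map_smul, LinearEquiv.apply_symm_apply]; simp [e])
    exact ⟨a i₀, congrArg Subtype.val heq⟩
  · rintro ⟨c, rfl⟩
    exact Submodule.smul_mem _ c l.2

end Relations

section Segre

variable {F ι V W : Type*} [Field F] [Fintype ι] [AddCommGroup V] [Module F V]
  [AddCommGroup W] [Module F W]

/-- The Segre variety spanned by a family of subspaces, described without coordinates: the nonzero
vectors obtained by rescaling the terms of a relation `∑ i, f i = 0` with `f i ∈ S i`. For `k + 1`
members of a regulus in general position this recovers the rank-one matrices. -/
def segreVariety (S : ι → Submodule F V) : Set V :=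
  {v | v ≠ 0 ∧ ∃ f : ι → V, (∀ i, f i ∈ S i) ∧ ∑ i, f i = 0 ∧
    ∃ a : ι → F, v = ∑ i, a i • f i}

theorem preimage_segreVariety_map (φ : V ≃ₗ[F] W) (S : ι → Submodule F V) :
    φ ⁻¹' segreVariety (fun i => (S i).map (φ : V →ₗ[F] W)) = segreVariety S := by
  ext v
  refine and_congr (by simp) ⟨?_, ?_⟩
  · rintro ⟨f, hf, hsum, a, hv⟩
    refine ⟨fun i => φ.symm (f i), fun i => ?_, ?_, a, ?_⟩
    · obtain ⟨u, hu, huf⟩ := hf i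
      simpa [← huf] using hu
    · rw [← map_sum, hsum, map_zero]
    · simpa [map_sum] using congrArg φ.symm hv
  · rintro ⟨f, hf, hsum, a, rfl⟩
    exact ⟨fun i => φ (f i), fun i => Submodule.mem_map_of_mem (hf i),
      by rw [← map_sum, hsum, map_zero], a, by simp [map_sum]⟩

end Segre

section Regulus

variable {F ι m n : Type*} [Field F]

/-- The member `{x yᵀ : y}` of the regulus of the standard Segre variety, as a subspace. -/
def regulusSubspace (n : Type*) (x : m → F) : Submodule F (Matrix m n F) :=
  LinearMap.range (vecMulVecBilin F F x : (n → F) →ₗ[F] Matrix m n F)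

theorem ne_zero_of_map_eq_regulusSubspace {V : Type*} [AddCommGroup V] [Module F V]
    {S : Submodule F V} {φ : V ≃ₗ[F] Matrix m n F} {x : m → F} (hS : S ≠ ⊥)
    (hφ : S.map (φ : V →ₗ[F] Matrix m n F) = regulusSubspace n x) : x ≠ 0 := by
  rintro rfl
  refine hS ((Submodule.map_eq_bot_iff (e := φ)).1 ?_)
  rw [hφ, regulusSubspace, map_zero, LinearMap.range_zero]

theorem rank_eq_one_iff_exists_vecMulVec [Fintype n] {M : Matrix m n F} :
    M.rank = 1 ↔ M ≠ 0 ∧ ∃ x y, M = Matrix.vecMulVec x y := by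
  classical
  constructor
  · intro hM
    refine ⟨by rintro rfl; simp at hM, ?_⟩
    rw [Matrix.rank, finrank_eq_one_iff'] at hM
    obtain ⟨x, -, hx⟩ := hM
    choose y hy using fun j => hx ⟨M.mulVecLin (Pi.single j 1), LinearMap.mem_range_self _ _⟩
    refine ⟨x, y, Matrix.ext fun i j => ?_⟩
    have hij : y j * x.1 i = M i j := by simpa using congrFun (congrArg Subtype.val (hy j)) i
    rw [Matrix.vecMulVec_apply, mul_comm, hij]
  · rintro ⟨hM, x, y, rfl⟩
    refine le_antisymm (Matrix.rank_vecMulVec_le x y) (Nat.one_le_iff_ne_zero.2 fun h0 => hM ?_)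
    rw [Matrix.rank, Submodule.finrank_eq_zero, LinearMap.range_eq_bot] at h0
    exact Matrix.toLin'.injective (h0.trans (map_zero _).symm)

theorem iSup_span_singleton_eq_top_of_iSup_regulusSubspace_eq_top [Nonempty n] {x : ι → m → F}
    {p : ι → Prop} (hx : ⨆ (j) (_ : p j), regulusSubspace n (x j) = ⊤) :
    ⨆ (j) (_ : p j), Submodule.span F {x j} = ⊤ := by
  obtain ⟨s⟩ := ‹Nonempty n›
  let col : Matrix m n F →ₗ[F] m → F := LinearMap.pi fun r => Matrix.entryLinearMap F F r s
  have hcol : Function.Surjective col := fun w => ⟨Matrix.of fun r _ => w r, rfl⟩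
  rw [eq_top_iff, ← LinearMap.range_eq_top.2 hcol, LinearMap.range_eq_map, ← hx]
  simp only [Submodule.map_iSup]
  gcongr with j _
  rintro _ ⟨_, ⟨y, rfl⟩, rfl⟩
  exact Submodule.mem_span_singleton.2 ⟨y s, by ext r; simp [col, Matrix.vecMulVec_apply, mul_comm]⟩

theorem sum_vecMulVec (t : Finset ι) (w : ι → m → F) (y : n → F) :
    Matrix.vecMulVec (∑ i ∈ t, w i) y = ∑ i ∈ t, Matrix.vecMulVec (w i) y :=
  (vecMulVecBilin F F).map_sum₂ t w y

variable [Fintype ι]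

theorem sum_vecMulVec_eq_zero_iff {x : ι → m → F} {l : ι → F}
    (hl : ∀ a : ι → F, ∑ i, a i • x i = 0 ↔ ∃ c : F, a = c • l) (y : ι → n → F) :
    ∑ i, Matrix.vecMulVec (x i) (y i) = 0 ↔ ∃ z : n → F, ∀ i, y i = l i • z := by
  have columnwise : ∑ i, Matrix.vecMulVec (x i) (y i) = 0 ↔ ∀ s, ∑ i, y i s • x i = 0 := by
    simp only [← Matrix.ext_iff, funext_iff, Matrix.sum_apply, Matrix.vecMulVec_apply,
      Finset.sum_apply, Pi.smul_apply, smul_eq_mul, mul_comm, Matrix.zero_apply, Pi.zero_apply]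
    exact forall_comm
  simp only [columnwise, hl, Classical.skolem, funext_iff, Pi.smul_apply, smul_eq_mul, mul_comm]
  exact exists_congr fun z => forall_comm

theorem setOf_rank_eq_one_eq_segreVariety [Fintype m] [Fintype n] [Nonempty n] {x : ι → m → F}
    (hcard : Fintype.card ι = 1 + Fintype.card m)
    (hx : ∀ i, ⨆ j ≠ i, regulusSubspace n (x j) = ⊤) :
    {M : Matrix m n F | M.rank = 1} = segreVariety fun i => regulusSubspace n (x i) := by
  have hspan (i : ι) := iSup_span_singleton_eq_top_of_iSup_regulusSubspace_eq_top (hx i)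
  obtain ⟨l, hl0, hl⟩ :=
    exists_ne_zero_sum_smul_eq_zero_iff hspan (by simpa using hcard)
  ext M
  rw [Set.mem_ofPred_eq, rank_eq_one_iff_exists_vecMulVec]
  refine and_congr_right fun _ => ⟨?_, ?_⟩
  · rintro ⟨w, z, rfl⟩
    obtain ⟨i₀⟩ : Nonempty ι := Fintype.card_pos_iff.1 (by lia)
    obtain ⟨b, -, rfl⟩ := exists_sum_eq_of_iSup_range_eq_top
      (g := fun j => LinearMap.toSpanSingleton F (m → F) (x j)) (i := i₀)
      (by simpa only [LinearMap.range_toSpanSingleton] using hspan i₀) w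
    refine ⟨fun i => Matrix.vecMulVec (x i) (l i • z), fun i => ⟨_, rfl⟩,
      (sum_vecMulVec_eq_zero_iff hl _).2 ⟨z, fun _ => rfl⟩, fun i => b i / l i, ?_⟩
    simp [Matrix.vecMulVec_smul, smul_smul, hl0, ← Matrix.smul_vecMulVec, sum_vecMulVec]
  · rintro ⟨f, hf, hsum, a, rfl⟩
    choose y hy using hf
    obtain rfl : (fun i => Matrix.vecMulVec (x i) (y i)) = f := funext hy
    obtain ⟨z, hz⟩ := (sum_vecMulVec_eq_zero_iff hl y).1 hsum
    refine ⟨∑ i, (a i * l i) • x i, z, ?_⟩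
    simp [hz, Matrix.vecMulVec_smul, smul_smul, Matrix.smul_vecMulVec, sum_vecMulVec]

theorem preimage_rank_eq_one_eq_segreVariety [Fintype m] [Fintype n] [Nonempty n]
    {V : Type*} [AddCommGroup V] [Module F V] {S : ι → Submodule F V} {x : ι → m → F}
    (hcard : Fintype.card ι = 1 + Fintype.card m) (hS : ∀ i, ⨆ j ≠ i, S j = ⊤)
    (φ : V ≃ₗ[F] Matrix m n F)
    (hφ : ∀ i, (S i).map (φ : V →ₗ[F] Matrix m n F) = regulusSubspace n (x i)) :
    φ ⁻¹' {M | M.rank = 1} = segreVariety S := by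
  have hx (i : ι) : ⨆ j ≠ i, regulusSubspace n (x j) = ⊤ := by
    simp only [← hφ, ← Submodule.map_iSup, hS, Submodule.map_top, LinearEquiv.range]
  rw [setOf_rank_eq_one_eq_segreVariety hcard hx, ← preimage_segreVariety_map φ]
  simp only [hφ]

end Regulus

section Coordinates

variable {F V n : Type*} [Field F] [AddCommGroup V] [Module F V] {k : ℕ}

theorem exists_linearMap_sum_eq_zero_range_eq [Fintype n] {ι : Type*} [Fintype ι] [Nonempty ι]
    {S : ι → Submodule F V} [∀ i, FiniteDimensional F (S i)]
    (hrank : ∀ i, Module.finrank F (S i) = Fintype.card n)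
    (hdim : Fintype.card ι * Fintype.card n = Fintype.card n + Module.finrank F V)
    (hS : ∀ i, ⨆ j ≠ i, S j = ⊤) :
    ∃ p : ι → (n → F) →ₗ[F] V, ∑ i, p i = 0 ∧ ∀ i, LinearMap.range (p i) = S i := by
  let g (i : ι) : S i →ₗ[F] V := (S i).subtype
  let e (i : ι) : relationSpace g ≃ₗ[F] S i :=
    relationSpaceEquiv (by simpa [g] using hS i) (by simpa [hrank] using hdim)
  let c : (n → F) ≃ₗ[F] relationSpace g :=
    LinearEquiv.ofFinrankEq _ _ (by simp [(e (Classical.arbitrary ι)).finrank_eq, hrank])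
  refine ⟨fun i => (S i).subtype ∘ₗ (c.trans (e i)).toLinearMap, ?_, fun i => ?_⟩
  · ext1 y
    simpa [e, g] using mem_relationSpace.1 (c y).2
  · rw [LinearMap.range_comp_of_range_eq_top _ (LinearEquiv.range _), Submodule.range_subtype]

/-- The standard frame of `F ^ k`: the unit vectors `e₁, …, e_k` followed by `-(e₁ + ⋯ + e_k)`. -/
def standardFrame (F : Type*) [Field F] (k : ℕ) : Fin (k + 1) → Fin k → F :=
  Fin.snoc (fun i => Pi.single i 1) (-1)

/-- The linear map sending a matrix with rows `yᵢ` to `∑ pᵢ yᵢ`. -/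
def sumRows {m : Type*} [Fintype m] (p : m → (n → F) →ₗ[F] V) : Matrix m n F →ₗ[F] V :=
  (∑ i, p i ∘ₗ LinearMap.proj i) ∘ₗ (Matrix.ofLinearEquiv F).symm.toLinearMap

theorem sumRows_vecMulVec {m : Type*} [Fintype m] (p : m → (n → F) →ₗ[F] V) (x : m → F)
    (y : n → F) : sumRows p (Matrix.vecMulVec x y) = ∑ i, x i • p i y := by
  have hrow (i : m) : Matrix.of.symm (Matrix.vecMulVec x y) i = x i • y := rfl
  simp [sumRows, hrow]

theorem sumRows_vecMulVec_standardFrame {p : Fin (k + 1) → (n → F) →ₗ[F] V}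
    (hp : ∑ i, p i = 0) (i : Fin (k + 1)) (y : n → F) :
    sumRows (Fin.init p) (Matrix.vecMulVec (standardFrame F k i) y) = p i y := by
  rw [sumRows_vecMulVec]
  cases i using Fin.lastCases with
  | last =>
    have hsum : ∑ i : Fin k, p i.castSucc y + p (Fin.last k) y = 0 := by
      simpa [Fin.sum_univ_castSucc] using LinearMap.congr_fun hp y
    simp [standardFrame, Fin.init, eq_neg_of_add_eq_zero_right hsum]
  | cast i => simp [standardFrame, Fin.init, Pi.single_apply]

theorem map_sumRows_regulusSubspace {p : Fin (k + 1) → (n → F) →ₗ[F] V}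
    (hp : ∑ i, p i = 0) (i : Fin (k + 1)) :
    (regulusSubspace n (standardFrame F k i)).map (sumRows (Fin.init p)) =
      LinearMap.range (p i) := by
  rw [regulusSubspace, ← LinearMap.range_comp]
  exact congrArg _ (LinearMap.ext (sumRows_vecMulVec_standardFrame hp i))

theorem exists_linearEquiv_map_eq_regulusSubspace [Fintype n]
    {S : Fin (k + 1) → Submodule F V} [∀ i, FiniteDimensional F (S i)]
    (hV : Module.finrank F V = k * Fintype.card n)
    (hrank : ∀ i, Module.finrank F (S i) = Fintype.card n)
    (hS : ∀ i, ⨆ j ≠ i, S j = ⊤) :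
    ∃ (φ : V ≃ₗ[F] Matrix (Fin k) n F) (x : Fin (k + 1) → Fin k → F),
      ∀ i, (S i).map (φ : V →ₗ[F] Matrix (Fin k) n F) = regulusSubspace n (x i) := by
  obtain ⟨p, hp, hrange⟩ := exists_linearMap_sum_eq_zero_range_eq hrank
    (by rw [Fintype.card_fin, hV]; ring) hS
  have hmap (i) : (regulusSubspace n (standardFrame F k i)).map (sumRows (Fin.init p)) = S i :=
    (map_sumRows_regulusSubspace hp i).trans (hrange i)
  have hsurj : Function.Surjective (sumRows (Fin.init p)) := by
    rw [← LinearMap.range_eq_top, eq_top_iff, ← hS 0]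
    exact iSup₂_le fun j _ => hmap j ▸ LinearMap.map_le_range
  have : FiniteDimensional F V := .of_surjective _ hsurj
  have hinj : Function.Injective (sumRows (Fin.init p)) :=
    (LinearMap.injective_iff_surjective_of_finrank_eq_finrank
      (by simp [hV, Module.finrank_matrix])).2 hsurj
  let ψ := LinearEquiv.ofBijective (sumRows (Fin.init p)) ⟨hinj, hsurj⟩
  refine ⟨ψ.symm, standardFrame F k, fun i => ?_⟩
  rw [← hmap i, ← Submodule.map_comp]
  exact (congrArg (Submodule.map · _) ψ.symm_comp).trans (Submodule.map_id _)

end Coordinates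

section BlockSet

variable {F : Type} [Field F] {V : Type*} [AddCommGroup V] [Module F V] {k h : ℕ}

theorem coe_regulusSubspace_fin (x : Fin k → F) :
    (regulusSubspace (Fin h) x : Set (Matrix (Fin k) (Fin h) F)) = blockSet x := by
  ext M
  exact exists_congr fun y => eq_comm

theorem image_eq_blockSet_iff {S : Submodule F V} {φ : V ≃ₗ[F] Matrix (Fin k) (Fin h) F}
    {x : Fin k → F} :
    φ '' S = blockSet x ↔
      S.map (φ : V →ₗ[F] Matrix (Fin k) (Fin h) F) = regulusSubspace (Fin h) x := by
  rw [← coe_regulusSubspace_fin, ← SetLike.coe_set_eq (q := regulusSubspace (Fin h) x)]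
  rfl

end BlockSet

theorem stmt6_general {k h : ℕ} (hh : 0 < h) {F : Type} [Field F] {V : Type*} [AddCommGroup V]
    [Module F V] (hV : Module.finrank F V = k * h) (Sg : Fin (k + 1) → Submodule F V)
    (hrk : ∀ i, Module.finrank F (Sg i) = h) (hsp : ∀ i : Fin (k + 1), (⨆ j ≠ i, Sg j) = ⊤) :
    (∃ (φ : V ≃ₗ[F] Matrix (Fin k) (Fin h) F) (x : Fin (k + 1) → Fin k → F),
      (∀ i, x i ≠ 0) ∧ ∀ i, ⇑φ '' (Sg i : Set V) = blockSet (x i)) ∧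
    (∀ (φ₁ φ₂ : V ≃ₗ[F] Matrix (Fin k) (Fin h) F)
        (x₁ x₂ : Fin (k + 1) → Fin k → F),
      (∀ i, ⇑φ₁ '' (Sg i : Set V) = blockSet (x₁ i)) →
      (∀ i, ⇑φ₂ '' (Sg i : Set V) = blockSet (x₂ i)) →
      ⇑φ₁ ⁻¹' {M : Matrix (Fin k) (Fin h) F | M.rank = 1} =
        ⇑φ₂ ⁻¹' {M : Matrix (Fin k) (Fin h) F | M.rank = 1}) := by
  have : Nonempty (Fin h) := ⟨⟨0, hh⟩⟩
  have hfin (i) : FiniteDimensional F (Sg i) := .of_finrank_pos (by rwa [hrk])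
  have hne (i) : Sg i ≠ ⊥ := fun hi => hh.ne (by rw [← hrk i, hi, finrank_bot])
  simp only [image_eq_blockSet_iff]
  constructor
  · obtain ⟨φ, x, hφ⟩ := exists_linearEquiv_map_eq_regulusSubspace (n := Fin h)
      (by simpa using hV) (by simpa using hrk) hsp
    exact ⟨φ, x, fun i => ne_zero_of_map_eq_regulusSubspace (hne i) (hφ i), hφ⟩
  · intro φ₁ φ₂ x₁ x₂ hφ₁ hφ₂
    have hcard : Fintype.card (Fin (k + 1)) = 1 + Fintype.card (Fin k) := by simp [add_comm]
    rw [preimage_rank_eq_one_eq_segreVariety hcard hsp φ₁ hφ₁,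
      preimage_rank_eq_one_eq_segreVariety hcard hsp φ₂ hφ₂]

/-- Let `q` be a prime power and `V` a `k*h`-dimensional vector space
over `F_q`.  Every pseudo-arc `Σ₁, …, Σ_{k+1}` of `PG(kh-1, q)` of size `k+1` (each
`Σᵢ` of dimension `h` and any `k` of them spanning `V`) is, after a suitable linear
identification `φ : V ≃ M_{k×h}(F_q)`, carried to rank-one blocks
`{x_i yᵀ : y ∈ F_q^h}` with `x_i ≠ 0`; moreover the resulting Segre variety
(the preimage of the set of rank-one matrices) does not depend on the choice of
such an identification. -/
theorem stmt6 (q k h : ℕ) (hq : IsPrimePow q) (hk : 2 ≤ k) (hh : 2 ≤ h)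
    (F : Type) [Field F] [Fintype F] (hF : Fintype.card F = q)
    (V : Type) [AddCommGroup V] [Module F V] (hV : Module.finrank F V = k * h)
    (Sg : Fin (k + 1) → Submodule F V) (hinj : Function.Injective Sg)
    (hrk : ∀ i, Module.finrank F (Sg i) = h)
    (hsp : ∀ i : Fin (k + 1), (⨆ j ≠ i, Sg j) = ⊤) :
    (∃ (φ : V ≃ₗ[F] Matrix (Fin k) (Fin h) F) (x : Fin (k + 1) → Fin k → F),
      (∀ i, x i ≠ 0) ∧ ∀ i, ⇑φ '' (Sg i : Set V) = blockSet (x i)) ∧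
    (∀ (φ₁ φ₂ : V ≃ₗ[F] Matrix (Fin k) (Fin h) F)
        (x₁ x₂ : Fin (k + 1) → Fin k → F),
      (∀ i, x₁ i ≠ 0) → (∀ i, ⇑φ₁ '' (Sg i : Set V) = blockSet (x₁ i)) →
      (∀ i, x₂ i ≠ 0) → (∀ i, ⇑φ₂ '' (Sg i : Set V) = blockSet (x₂ i)) →
      ⇑φ₁ ⁻¹' {M : Matrix (Fin k) (Fin h) F | M.rank = 1} =
        ⇑φ₂ ⁻¹' {M : Matrix (Fin k) (Fin h) F | M.rank = 1}) := by
  obtain ⟨hexists, hunique⟩ := stmt6_general (by lia) hV Sg hrk hsp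
  exact ⟨hexists, fun φ₁ φ₂ x₁ x₂ _ hφ₁ _ hφ₂ => hunique φ₁ φ₂ x₁ x₂ hφ₁ hφ₂⟩
end

section
/- Let q be a prime power, k, h ≥ 2, and V a kh-dimensional F_q-vector space. Let P be a pseudo-arc of PG(V) of size k+1, and let φ : V → M_{k×h}(F_q) be an F_q-linear isomorphism carrying each member of P to a subspace of the form { x yᵀ : y ∈ F_q^h } for some nonzero x ∈ F_q^k (such φ exists, and the family R_{h,q} = { φ^{-1}({ x yᵀ : y ∈ F_q^h }) : x ∈ F_q^k \ {0} } is the (h-1)-regulus of the unique Segre variety of PG(V) containing P). If D is a Desarguesian (h-1)-spread of PG(V) with P ⊆ D, then R_{h,q} ⊆ D. -/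
/-- `D` is a *Desarguesian `(h-1)`-spread* of `PG(V)`: there is an `F`-algebra
homomorphism `φ : E → End_F(V)` (where `E` is the field with `q^h` elements, making
`V` an `E`-vector space) such that `D` consists exactly of the `1`-dimensional
`E`-subspaces `E·v = {φ(α)(v) : α ∈ E}` of `V`, regarded as `F`-subspaces. -/
def IsDesSpread {F V : Type} (E : Type) [Field F] [Field E] [Algebra F E]
    [AddCommGroup V] [Module F V] (D : Set (Submodule F V)) : Prop :=
  ∃ φ : E →ₐ[F] Module.End F V,
    D = {W : Submodule F V | ∃ v : V, v ≠ 0 ∧ (W : Set V) = Set.range fun α : E => φ α v}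

/-! A linear endomorphism `T` of the space of matrices fixing every block `{x yᵀ : y}` with `x` in
a projective frame fixes all blocks: for given `y` and `j`, the map `z ↦ (j-th column of T (z yᵀ))`
has every vector of the frame as an eigenvector, so it is a homothety `z ↦ cⱼ z`, which means
`T (z yᵀ) = z cᵀ`.  Apply this to the scalar multiplications by elements of the extension field `E`:
they fix the members of the pseudo-arc, hence every member `W` of the regulus.  So `W` is an
`E`-subspace, and as its dimension over `F` is that of the pseudo-arc elements, it is an `E`-line.
-/

open Module Submodule

section ProjectiveFrame

variable {K M ι : Type*} [Field K] [AddCommGroup M] [Module K M] [Fintype ι] {x : ι → M}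

variable (K) in
/-- A projective frame of `PG(M)`, given by representative vectors: `dim M + 1` vectors such that
any `dim M` of them span `M`. -/
structure IsProjectiveFrame (x : ι → M) : Prop where
  card_eq : Fintype.card ι = finrank K M + 1
  span_image_compl_singleton : ∀ i, span K (x '' {i}ᶜ) = ⊤

namespace IsProjectiveFrame

theorem span_image_compl_pair_lt_top (hx : IsProjectiveFrame K x) {i j : ι} (hij : i ≠ j) :
    span K (x '' {i, j}ᶜ) < ⊤ := by
  classical
  have hle : finrank K (span K (x '' {i, j}ᶜ)) ≤ Fintype.card ι - 2 := by
    rw [← Finset.card_pair hij, ← Finset.card_compl]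
    calc finrank K (span K (x '' {i, j}ᶜ))
        = (Finset.image x {i, j}ᶜ : Set M).finrank K := by
          rw [Finset.coe_image, Finset.coe_compl, Finset.coe_pair, Set.finrank]
      _ ≤ (Finset.image x {i, j}ᶜ).card := finrank_span_finset_le_card _
      _ ≤ ({i, j}ᶜ : Finset ι).card := Finset.card_image_le
  have htwo : 2 ≤ Fintype.card ι := Finset.card_pair hij ▸ Finset.card_le_univ {i, j}
  refine lt_top_iff_ne_top.2 fun htop => ?_
  rw [htop, finrank_top] at hle
  have := hx.card_eq
  omega

theorem exists_dual_ne_zero_of_ne (hx : IsProjectiveFrame K x) {i j : ι} (hij : i ≠ j) :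
    ∃ ψ : Dual K M, ψ (x i) ≠ 0 ∧ ∀ l, l ≠ i → l ≠ j → ψ (x l) = 0 := by
  obtain ⟨ψ, hψ0, hψ⟩ := exists_le_ker_of_lt_top _ (hx.span_image_compl_pair_lt_top hij)
  have hvanish : ∀ l, l ≠ i → l ≠ j → ψ (x l) = 0 := fun l hli hlj =>
    hψ (subset_span ⟨l, by simp [hli, hlj], rfl⟩)
  refine ⟨ψ, fun hi => hψ0 ?_, hvanish⟩
  refine LinearMap.ext_on (hx.span_image_compl_singleton j) ?_
  rintro _ ⟨l, hlj, rfl⟩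
  obtain rfl | hli := eq_or_ne l i
  · exact hi
  · exact hvanish l hli hlj

theorem eigenvalue_eq (hx : IsProjectiveFrame K x) {f : End K M} {μ : ι → K}
    (hf : ∀ i, f (x i) = μ i • x i) (i j : ι) : μ i = μ j := by
  obtain rfl | hij := eq_or_ne i j
  · rfl
  obtain ⟨ψ, hψi, hψ⟩ := hx.exists_dual_ne_zero_of_ne hij
  have hψf : ψ ∘ₗ f = μ j • ψ := by
    refine LinearMap.ext_on (hx.span_image_compl_singleton i) ?_
    rintro _ ⟨l, hli, rfl⟩
    obtain rfl | hlj := eq_or_ne l j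
    · simp [hf]
    · simp [hf, hψ l hli hlj]
  have hψfi : μ i * ψ (x i) = μ j * ψ (x i) := by
    simpa [hf] using LinearMap.congr_fun hψf (x i)
  exact mul_right_cancel₀ hψi hψfi

theorem exists_eq_smul_id (hx : IsProjectiveFrame K x) {f : End K M}
    (hf : ∀ i, ∃ μ : K, f (x i) = μ • x i) : ∃ c : K, f = c • LinearMap.id := by
  choose μ hμ using hf
  obtain ⟨i₀⟩ : Nonempty ι := Fintype.card_pos_iff.1 (by rw [hx.card_eq]; omega)
  refine ⟨μ i₀, LinearMap.ext_on (hx.span_image_compl_singleton i₀) ?_⟩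
  rintro _ ⟨i, -, rfl⟩
  simp [hμ, hx.eigenvalue_eq hμ i i₀]

end IsProjectiveFrame

end ProjectiveFrame

section RegulusBlock

variable {K m n ι : Type*} [Field K]

/-- The member `{x yᵀ : y}` of the regulus of the Segre variety, as a subspace: the linear version
of `blockSet`, for matrices indexed by arbitrary types. -/
def regulusBlock (n : Type*) (x : m → K) : Submodule K (Matrix m n K) :=
  LinearMap.range (vecMulVecBilin K K x)

/-- `Matrix.col`, the extraction of the `j`-th column, as a linear map. -/
def colLinearMap (j : n) : Matrix m n K →ₗ[K] m → K where
  toFun M := M.col j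
  map_add' _ _ := rfl
  map_smul' _ _ := rfl

theorem colLinearMap_vecMulVec (j : n) (x : m → K) (y : n → K) :
    colLinearMap j (Matrix.vecMulVec x y) = y j • x := by
  rw [← op_smul_eq_smul]
  exact Matrix.col_vecMulVec x y j

theorem vecMulVec_mem_regulusBlock (x : m → K) (y : n → K) :
    Matrix.vecMulVec x y ∈ regulusBlock n x :=
  ⟨y, rfl⟩

theorem vecMulVecBilin_injective {x : m → K} (hx : x ≠ 0) :
    Function.Injective (vecMulVecBilin (n := n) K K x) := by
  obtain ⟨i, hi⟩ := Function.ne_iff.1 hx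
  exact fun y y' hyy' => funext fun j => mul_left_cancel₀ hi (congrFun₂ hyy' i j)

theorem finrank_regulusBlock [Fintype n] {x : m → K} (hx : x ≠ 0) :
    finrank K (regulusBlock n x) = Fintype.card n :=
  (LinearMap.finrank_range_of_inj (vecMulVecBilin_injective hx)).trans
    (finrank_fintype_fun_eq_card K)

theorem regulusBlock_ne_bot_iff {x : m → K} : regulusBlock n x ≠ ⊥ ↔ x ≠ 0 ∧ Nonempty n := by
  constructor
  · intro hbot
    obtain ⟨_, ⟨y, rfl⟩, hxy⟩ := exists_mem_ne_zero_of_ne_bot hbot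
    refine ⟨fun hx => hxy (by simp [hx]), not_isEmpty_iff.1 fun _ => hxy ?_⟩
    rw [Subsingleton.elim y 0, map_zero]
  · rintro ⟨hx, _⟩
    have hx1 : vecMulVecBilin K K x (1 : n → K) ≠ 0 :=
      (map_ne_zero_iff _ (vecMulVecBilin_injective hx)).2 one_ne_zero
    exact (Submodule.ne_bot_iff _).2 ⟨_, vecMulVec_mem_regulusBlock x 1, hx1⟩

theorem span_image_eq_top_of_iSup_regulusBlock_eq_top [Nonempty n] {x : ι → m → K} {s : Set ι}
    (hs : ⨆ i ∈ s, regulusBlock n (x i) = ⊤) : span K (x '' s) = ⊤ := by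
  let j : n := Classical.arbitrary n
  have hle : ⨆ i ∈ s, regulusBlock n (x i) ≤ (span K (x '' s)).comap (colLinearMap j) := by
    refine iSup₂_le fun i hi => ?_
    rintro _ ⟨y, rfl⟩
    rw [mem_comap, vecMulVecBilin_apply_apply, colLinearMap_vecMulVec]
    exact smul_mem _ _ (subset_span ⟨i, hi, rfl⟩)
  refine eq_top_iff'.2 fun z => ?_
  have hz : Matrix.vecMulVec z 1 ∈ (span K (x '' s)).comap (colLinearMap j) := hle (hs ▸ mem_top)
  simpa only [mem_comap, colLinearMap_vecMulVec, Pi.one_apply, one_smul] using hz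

theorem isProjectiveFrame_of_iSup_regulusBlock_eq_top [Nonempty n] [Fintype m] [Fintype ι]
    {x : ι → m → K} (hcard : Fintype.card ι = Fintype.card m + 1)
    (hx : ∀ i, ⨆ j ≠ i, regulusBlock n (x j) = ⊤) : IsProjectiveFrame K x where
  card_eq := by rw [hcard, finrank_fintype_fun_eq_card]
  span_image_compl_singleton i := span_image_eq_top_of_iSup_regulusBlock_eq_top (hx i)

theorem IsProjectiveFrame.regulusBlock_mem_invtSubmodule [Fintype ι] {x : ι → m → K}
    (hx : IsProjectiveFrame K x) {T : End K (Matrix m n K)}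
    (hT : ∀ i, regulusBlock n (x i) ∈ T.invtSubmodule) (z : m → K) :
    regulusBlock n z ∈ T.invtSubmodule := by
  rintro _ ⟨y, rfl⟩
  let columnOfImage (j : n) : End K (m → K) :=
    colLinearMap j ∘ₗ T ∘ₗ (vecMulVecBilin K K).flip y
  have heigen : ∀ j i, ∃ μ : K, columnOfImage j (x i) = μ • x i := by
    intro j i
    obtain ⟨y', hy'⟩ := hT i (vecMulVec_mem_regulusBlock (x i) y)
    exact ⟨y' j, (congrArg (colLinearMap j) hy').symm.trans (colLinearMap_vecMulVec j (x i) y')⟩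
  choose c hc using fun j => hx.exists_eq_smul_id (heigen j)
  refine ⟨c, Matrix.ext_col fun j => ?_⟩
  calc colLinearMap j (Matrix.vecMulVec z c) = c j • z := colLinearMap_vecMulVec j z c
    _ = columnOfImage j z := by simp [hc]

variable {V : Type*} [AddCommGroup V] [Module K V] {e : V ≃ₗ[K] Matrix m n K}
  {W : Submodule K V} {z : m → K}

theorem ne_bot_iff_of_map_eq_regulusBlock (hW : W.map e.toLinearMap = regulusBlock n z) :
    W ≠ ⊥ ↔ z ≠ 0 ∧ Nonempty n := by
  rw [← regulusBlock_ne_bot_iff, ← hW, ne_eq, ne_eq, Submodule.map_eq_bot_iff]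

theorem finrank_eq_of_map_eq_regulusBlock [Fintype n]
    (hW : W.map e.toLinearMap = regulusBlock n z) (hz : z ≠ 0) :
    finrank K W = Fintype.card n := by
  rw [← e.finrank_map_eq W, hW, finrank_regulusBlock hz]

theorem IsProjectiveFrame.mem_invtSubmodule_of_map_eq_regulusBlock [Fintype ι] {x : ι → m → K}
    (hx : IsProjectiveFrame K x) {S : ι → Submodule K V}
    (hS : ∀ i, (S i).map e.toLinearMap = regulusBlock n (x i))
    (hW : W.map e.toLinearMap = regulusBlock n z) {f : End K V}
    (hf : ∀ i, S i ∈ f.invtSubmodule) : W ∈ f.invtSubmodule := by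
  simp only [← e.map_mem_invtSubmodule_conj_iff, hS, hW] at hf ⊢
  exact hx.regulusBlock_mem_invtSubmodule hf z

end RegulusBlock

section ExtensionField

variable {F E V : Type*} [Field F] [Field E] [Algebra F E] [AddCommGroup V] [Module F V]
  [Module E V] [IsScalarTower F E V]

theorem restrictScalars_mem_invtSubmodule_lsmul (U : Submodule E V) (α : E) :
    U.restrictScalars F ∈ (Algebra.lsmul F F V α).invtSubmodule :=
  fun _ hv => U.smul_mem α hv

theorem finrank_restrictScalars_span_singleton {v : V} (hv : v ≠ 0) :
    finrank F ((E ∙ v).restrictScalars F) = finrank F E :=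
  ((LinearEquiv.toSpanNonzeroSingleton E V v hv).restrictScalars F).finrank_eq.symm

theorem eq_restrictScalars_span_singleton {W : Submodule F V} [FiniteDimensional F W]
    (hstable : ∀ α : E, W ∈ (Algebra.lsmul F F V α).invtSubmodule)
    (hrank : finrank F W = finrank F E) {v : V} (hv : v ∈ W) (hv0 : v ≠ 0) :
    W = (E ∙ v).restrictScalars F := by
  have hle : (E ∙ v).restrictScalars F ≤ W := by
    intro w hw
    obtain ⟨α, rfl⟩ := mem_span_singleton.1 hw
    exact hstable α hv
  exact (eq_of_le_of_finrank_eq hle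
    ((finrank_restrictScalars_span_singleton hv0).trans hrank.symm)).symm

end ExtensionField

section DesarguesianSpread

variable {F E V : Type} [Field F] [Field E] [Algebra F E] [AddCommGroup V] [Module F V] {k h : ℕ}

theorem IsDesSpread.exists_module {D : Set (Submodule F V)} (hD : IsDesSpread E D) :
    ∃ (_ : Module E V) (_ : IsScalarTower F E V),
      D = {W | ∃ v : V, v ≠ 0 ∧ W = (E ∙ v).restrictScalars F} := by
  obtain ⟨φ, rfl⟩ := hD
  let _ : Module E V := Module.compHom V φ.toRingHom
  have hsmul : ∀ (α : E) (v : V), α • v = φ α v := fun _ _ => rfl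
  have htower : IsScalarTower F E V := ⟨fun a α v => by simp [hsmul]⟩
  refine ⟨_, htower, Set.ext fun W => exists_congr fun v => and_congr_right fun _ => ?_⟩
  rw [← SetLike.coe_set_eq (p := W), coe_restrictScalars, span_singleton_eq_range]
  rfl

theorem map_eq_regulusBlock_iff (e : V ≃ₗ[F] Matrix (Fin k) (Fin h) F) {W : Submodule F V}
    {x : Fin k → F} :
    W.map e.toLinearMap = regulusBlock (Fin h) x ↔ e '' (W : Set V) = blockSet x := by
  have hcoe : (regulusBlock (Fin h) x : Set (Matrix (Fin k) (Fin h) F)) = blockSet x :=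
    Set.ext fun M => exists_congr fun y => eq_comm
  rw [← SetLike.coe_set_eq, hcoe, map_coe]
  rfl

theorem stmt7_general (S : Fin (k + 1) → Submodule F V) (hspan : ∀ i, ⨆ j ≠ i, S j = ⊤)
    (e : V ≃ₗ[F] Matrix (Fin k) (Fin h) F) (x : Fin (k + 1) → Fin k → F)
    (hmap : ∀ i, e '' (S i : Set V) = blockSet (x i))
    (D : Set (Submodule F V)) (hD : IsDesSpread E D) (hSD : ∀ i, S i ∈ D) :
    {W : Submodule F V | ∃ z : Fin k → F, z ≠ 0 ∧ e '' (W : Set V) = blockSet z} ⊆ D := by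
  obtain ⟨_, _, rfl⟩ := hD.exists_module
  choose v hv0 hSv using hSD
  simp only [← map_eq_regulusBlock_iff] at hmap ⊢
  rintro W ⟨z, hz, hW⟩
  have hblock : ∀ i, x i ≠ 0 ∧ Nonempty (Fin h) := fun i => by
    rw [← ne_bot_iff_of_map_eq_regulusBlock (hmap i), hSv i]
    simpa using hv0 i
  have hnonempty : Nonempty (Fin h) := (hblock 0).2
  have hframe : IsProjectiveFrame F x :=
    isProjectiveFrame_of_iSup_regulusBlock_eq_top (n := Fin h) (by simp) fun i => by
      simp only [← hmap, ← Submodule.map_iSup, hspan, Submodule.map_top, LinearEquiv.range]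
  have hstable : ∀ α : E, W ∈ (Algebra.lsmul F F V α).invtSubmodule := fun α =>
    hframe.mem_invtSubmodule_of_map_eq_regulusBlock hmap hW fun i =>
      hSv i ▸ restrictScalars_mem_invtSubmodule_lsmul _ α
  have hrank : finrank F W = finrank F E := by
    rw [finrank_eq_of_map_eq_regulusBlock hW hz, ← finrank_restrictScalars_span_singleton (hv0 0),
      ← hSv 0, finrank_eq_of_map_eq_regulusBlock (hmap 0) (hblock 0).1]
  have hWbot : W ≠ ⊥ := (ne_bot_iff_of_map_eq_regulusBlock hW).2 ⟨hz, hnonempty⟩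
  have : FiniteDimensional F V := e.symm.finiteDimensional
  obtain ⟨w, hwW, hw0⟩ := exists_mem_ne_zero_of_ne_bot hWbot
  exact ⟨w, hw0, eq_restrictScalars_span_singleton hstable hrank hwW hw0⟩

end DesarguesianSpread

/-- Let `P = {Sg 1, …, Sg (k+1)}` be a pseudo-arc of `PG(V)` of size
`k+1` and `φm : V ≃ M_{k×h}(F_q)` a linear identification carrying each member of `P`
to a rank-one block `{x yᵀ : y}`; the family `R_{h,q}` of all preimages of rank-one
blocks is the `(h-1)`-regulus of the unique Segre variety containing `P`.  If `D` is a
Desarguesian `(h-1)`-spread with `P ⊆ D`, then `R_{h,q} ⊆ D`. -/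
theorem stmt7 (q k h : ℕ) (hq : IsPrimePow q) (hk : 2 ≤ k) (hh : 2 ≤ h)
    (F : Type) [Field F] [Fintype F] (hF : Fintype.card F = q)
    (E : Type) [Field E] [Fintype E] [Algebra F E] (hE : Fintype.card E = q ^ h)
    (V : Type) [AddCommGroup V] [Module F V] (hV : Module.finrank F V = k * h)
    (Sg : Fin (k + 1) → Submodule F V) (hinj : Function.Injective Sg)
    (hrk : ∀ i, Module.finrank F (Sg i) = h)
    (hsp : ∀ i : Fin (k + 1), (⨆ j ≠ i, Sg j) = ⊤)
    (φm : V ≃ₗ[F] Matrix (Fin k) (Fin h) F) (x : Fin (k + 1) → Fin k → F)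
    (hx : ∀ i, x i ≠ 0) (hmap : ∀ i, ⇑φm '' (Sg i : Set V) = blockSet (x i))
    (D : Set (Submodule F V)) (hD : IsDesSpread E D) (hPD : ∀ i, Sg i ∈ D) :
    {W : Submodule F V | ∃ z : Fin k → F, z ≠ 0 ∧
      ⇑φm '' (W : Set V) = blockSet z} ⊆ D :=
  stmt7_general Sg hsp φm x hmap D hD hPD
end

section
/- Let q > 2 be a prime power, k, h ≥ 2, and V a kh-dimensional F_q-vector space. Let P be a pseudo-arc of PG(V) of size k+1, and let D, D' be two distinct Desarguesian (h-1)-spreads of PG(V) with P ⊆ D ∩ D'. Then there exists a proper divisor r of h such that |D ∩ D'| = (q^{kr} - 1)/(q^r - 1). Moreover, there exist an F_q-algebra homomorphism φ : F_{q^h} → End_{F_q}(V) making V an F_{q^h}-vector space whose 1-dimensional F_{q^h}-subspaces constitute D, and an F_{q^h}-basis (e₁,...,e_k) of V, such that D ∩ D' is exactly the set of subspaces F_{q^h}·v where v ranges over the nonzero F_{q^r}-linear combinations of e₁,...,e_k. -/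
/-!
Let `E` act on `V` by the scalar multiplication defining the first spread, and let `ψ` be the action
defining the second one. Rescaling generators of the members of the pseudo-arc gives an `E`-basis
`e` of `V` such that each `e i` and `∑ i, e i` span the same line for both actions. Hence `ψ a`
multiplies all `e i` by one common scalar `g a`. The scalars whose multiplication map commutes with
every `ψ a` form an intermediate field `K`. On the `K`-span of `e`, `ψ a` is multiplication by
`g a`, so the vectors of this span have the same line for both actions. Conversely, if a vector with
some coordinate equal to `1` has the same line for both actions, then that coordinate forces `ψ a`
to multiply it by `g a`, so that its other coordinates commute with `ψ a` and lie in `K`.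
-/

open Module Submodule
open scoped LinearAlgebra.Projectivization

namespace DesarguesianSpread

section Lines

variable {F E V : Type*} [Field F] [Field E] [Algebra F E] [AddCommGroup V] [Module F V]

/-- The `1`-dimensional `E`-subspace `φ(E) v` of `V`, regarded as an `F`-subspace, where `E` acts
on `V` through `φ`. It is zero for `v = 0`. -/
def line (φ : E →ₐ[F] End F V) (v : V) : Submodule F V :=
  LinearMap.range (φ.toLinearMap.flip v)

/-- The Desarguesian spread of all `1`-dimensional `E`-subspaces of `V`, where `E` acts through
`φ`. -/
def spread (φ : E →ₐ[F] End F V) : Set (Submodule F V) :=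
  line φ '' {0}ᶜ

variable {φ ψ : E →ₐ[F] End F V} {v w : V} {W : Submodule F V}

theorem mem_line : w ∈ line φ v ↔ ∃ a, φ a v = w := Iff.rfl

theorem eq_line_iff : W = line φ v ↔ (W : Set V) = Set.range fun a => φ a v :=
  SetLike.ext'_iff

theorem self_mem_line (φ : E →ₐ[F] End F V) (v : V) : v ∈ line φ v :=
  mem_line.2 ⟨1, by simp⟩

theorem line_eq_line_of_mem (hw : w ≠ 0) (h : w ∈ line φ v) : line φ w = line φ v := by
  obtain ⟨b, rfl⟩ := h
  have hb : b ≠ 0 := by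
    rintro rfl
    simp at hw
  ext x
  simp only [mem_line]
  constructor
  · rintro ⟨a, rfl⟩
    exact ⟨a * b, by simp⟩
  · rintro ⟨a, rfl⟩
    refine ⟨a * b⁻¹, ?_⟩
    change φ (a * b⁻¹) (φ b v) = φ a v
    rw [← End.mul_apply, ← map_mul, inv_mul_cancel_right₀ hb]

theorem line_mem_spread (φ : E →ₐ[F] End F V) (hv : v ≠ 0) : line φ v ∈ spread φ :=
  ⟨v, hv, rfl⟩

theorem eq_line_of_mem_spread (hW : W ∈ spread φ) (hw : w ≠ 0) (h : w ∈ W) : W = line φ w := by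
  obtain ⟨v, -, rfl⟩ := hW
  exact (line_eq_line_of_mem hw h).symm

theorem spread_eq_setOf (φ : E →ₐ[F] End F V) :
    spread φ = {W : Submodule F V | ∃ v, v ≠ 0 ∧ (W : Set V) = Set.range fun a => φ a v} := by
  ext W
  simp only [spread, Set.mem_image, Set.mem_compl_singleton_iff, Set.mem_ofPred_eq, ← eq_line_iff,
    eq_comm]

theorem spread_eq_of_subset (h : spread φ ⊆ spread ψ) : spread φ = spread ψ := by
  refine h.antisymm ?_
  rintro _ ⟨v, hv, rfl⟩
  rw [← eq_line_of_mem_spread (h (line_mem_spread φ hv)) hv (self_mem_line φ v)]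
  exact line_mem_spread φ hv

/-- The action of `E` on an `E`-vector space `V` by scalar multiplication. -/
abbrev scalarHom (F E V : Type*) [Field F] [Field E] [Algebra F E] [AddCommGroup V] [Module F V]
    [Module E V] [IsScalarTower F E V] : E →ₐ[F] End F V :=
  Algebra.lsmul F F V

theorem exists_scalarHom_eq (φ : E →ₐ[F] End F V) :
    ∃ (_ : Module E V) (_ : IsScalarTower F E V), scalarHom F E V = φ := by
  let _ : Module E V := Module.compHom V φ.toRingHom
  have smul_def (a : E) (v : V) : a • v = φ a v := rfl
  refine ⟨inferInstance, ⟨fun c a v => ?_⟩, rfl⟩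
  rw [smul_def, smul_def, map_smul, LinearMap.smul_apply]

theorem span_image_eq_top_of_iSup_line [Module E V] [IsScalarTower F E V] {ι : Type*} {w : ι → V}
    {s : Set ι} (h : ⨆ j ∈ s, line (scalarHom F E V) (w j) = ⊤) : span E (w '' s) = ⊤ := by
  rw [← restrictScalars_eq_top_iff F, eq_top_iff, ← h, iSup₂_le_iff]
  rintro j hj _ ⟨a, rfl⟩
  exact smul_mem _ a (subset_span ⟨j, hj, rfl⟩)

end Lines

section Coordinates

variable {E V : Type*} [Field E] [AddCommGroup V] [Module E V] {k : ℕ}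

theorem exists_basis_sum_eq (hV : finrank E V = k) (w : Fin (k + 1) → V)
    (hw : ∀ i, span E (w '' {i}ᶜ) = ⊤) :
    ∃ e : Basis (Fin k) E V,
      (∀ i, e i ∈ E ∙ w i.castSucc) ∧ ∑ i, e i = w (Fin.last k) := by
  have range_castSucc : Set.range (fun i : Fin k => w i.castSucc) = w '' {Fin.last k}ᶜ := by
    ext v
    simp [Fin.exists_fin_succ', Fin.castSucc_ne_last]
  let b : Basis (Fin k) E V := basisOfTopLeSpanOfCardEqFinrank (fun i => w i.castSucc)
    (by rw [range_castSucc, hw]) (by rw [Fintype.card_fin, hV])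
  have hb (i) : b i = w i.castSucc := by simp [b]
  have coord_ne_zero (i) : b.repr (w (Fin.last k)) i ≠ 0 := fun hi => by
    have span_le : span E (w '' {i.castSucc}ᶜ) ≤ LinearMap.ker (b.coord i) := by
      rw [span_le]
      rintro _ ⟨j, hj, rfl⟩
      cases j using Fin.lastCases with
      | last => simpa using hi
      | cast l =>
        have hl : l ≠ i := by simpa using hj
        simp [← hb, Finsupp.single_eq_of_ne' hl]
    rw [hw, top_le_iff] at span_le
    have : b i ∈ LinearMap.ker (b.coord i) := span_le ▸ mem_top
    simp at this
  have he (i) := b.isUnitSMul_apply (fun i => (coord_ne_zero i).isUnit) i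
  refine ⟨b.isUnitSMul fun i => (coord_ne_zero i).isUnit, fun i => ?_, ?_⟩
  · rw [he, hb]
    exact smul_mem _ _ (mem_span_singleton_self _)
  · simp only [he, b.sum_repr]

theorem mem_span_range_iff_repr_mem {F : Type*} [Field F] [Algebra F E]
    (K : IntermediateField F E) {ι : Type*} {e : Basis ι E V} {v : V} :
    v ∈ span K (Set.range e) ↔ ∀ i, e.repr v i ∈ K := by
  have : IsTorsionFree K E := inferInstanceAs (IsTorsionFree K.toSubfield E)
  rw [e.mem_span_iff_repr_mem K v]
  simp only [IntermediateField.algebraMap_apply, Set.mem_range,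
    Subtype.exists, exists_prop, exists_eq_right]

end Coordinates

section CommutingField

variable {F E V ι : Type*} [Field F] [Field E] [Algebra F E] [AddCommGroup V] [Module F V]
  [Module E V] {ψ : E →ₐ[F] End F V} {e : Basis ι E V} {g : E → E} {v : V}

/-- `ψ` acts on every vector of the basis `e` through the same surjective map `g : E → E`. The map
`g` turns out to be `F`-linear but need not be multiplicative. -/
structure IsMultiplier (ψ : E →ₐ[F] End F V) (e : Basis ι E V) (g : E → E) : Prop where
  surjective : Function.Surjective g
  apply_basis (a : E) (i : ι) : ψ a (e i) = g a • e i

theorem IsMultiplier.apply_smul_basis (hg : IsMultiplier ψ e g) (a b : E) (i : ι) :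
    ψ a (g b • e i) = g (a * b) • e i := by
  rw [← hg.apply_basis, ← hg.apply_basis, map_mul, End.mul_apply]

theorem IsMultiplier.repr_apply_smul [Finite ι] (hg : IsMultiplier ψ e g) (a : E) (v : V)
    (i : ι) : e.repr (ψ a v) i • e i = ψ a (e.repr v i • e i) := by
  cases nonempty_fintype ι
  choose b hb using fun i => hg.surjective (e.repr v i)
  have apply_eq : ψ a v = ∑ i, g (a * b i) • e i := by
    conv_lhs => rw [← e.sum_repr v, map_sum]
    simp only [← hb, hg.apply_smul_basis]
  rw [apply_eq, e.repr_sum_self, ← hb, hg.apply_smul_basis]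

variable [IsScalarTower F E V]

theorem line_scalarHom_smul {a : E} (ha : a ≠ 0) (v : V) :
    line (scalarHom F E V) (a • v) = line (scalarHom F E V) v := by
  rcases eq_or_ne v 0 with rfl | hv
  · rw [smul_zero]
  · exact line_eq_line_of_mem (smul_ne_zero ha hv) ⟨a, rfl⟩

theorem exists_isMultiplier [Fintype ι]
    (he : ∀ i, line (scalarHom F E V) (e i) = line ψ (e i)) (hs : ∑ i, e i ≠ 0)
    (hes : line (scalarHom F E V) (∑ i, e i) = line ψ (∑ i, e i)) :
    ∃ g, IsMultiplier ψ e g := by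
  have exists_smul_sum (a) : ∃ c : E, c • ∑ i, e i = ψ a (∑ i, e i) :=
    hes.ge ⟨a, rfl⟩
  have exists_smul (a i) : ∃ c : E, c • e i = ψ a (e i) :=
    (he i).ge ⟨a, rfl⟩
  choose g hg using exists_smul_sum
  choose d hd using exists_smul
  have coeff_eq (a i) : d a i = g a := by
    have sum_eq : ∑ i, d a i • e i = ∑ i, g a • e i := by
      simp only [hd, ← Finset.smul_sum, hg, map_sum]
    simpa only [e.repr_sum_self] using congrArg (fun v => e.repr v i) sum_eq
  refine ⟨g, fun c => ?_, fun a i => by rw [← hd, coeff_eq]⟩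
  obtain ⟨a, ha⟩ : ∃ a, ψ a (∑ i, e i) = c • ∑ i, e i :=
    hes.le ⟨c, rfl⟩
  exact ⟨a, smul_left_injective E hs ((hg a).trans ha)⟩

/-- The scalars whose action on `V` commutes with the second action `ψ` of `E`. -/
def commutingField (ψ : E →ₐ[F] End F V) : IntermediateField F E :=
  ((Subalgebra.centralizer F (Set.range ψ)).comap (scalarHom F E V)).toIntermediateField
    fun c hc f hf => by
      rcases eq_or_ne c 0 with rfl | hc0
      · rw [inv_zero]
        exact hc f hf
      · ext v
        have hcv : f (c • c⁻¹ • v) = c • f (c⁻¹ • v) := LinearMap.congr_fun (hc f hf) (c⁻¹ • v)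
        change f (c⁻¹ • v) = c⁻¹ • f v
        rw [eq_inv_smul_iff₀ hc0, ← hcv, smul_inv_smul₀ hc0]

theorem mem_commutingField {c : E} :
    c ∈ commutingField ψ ↔ ∀ a v, ψ a (c • v) = c • ψ a v := by
  change (∀ f ∈ Set.range ψ, f * scalarHom F E V c = scalarHom F E V c * f) ↔ _
  rw [Set.forall_mem_range]
  simp only [LinearMap.ext_iff, End.mul_apply, Algebra.lsmul_coe]

-- Every vector of `V` is a sum of terms `g d • e j = ψ d (e j)`, on which the commutation relation
-- amounts to `g (a * b) = g b * g a`.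
theorem IsMultiplier.mem_commutingField_of_apply_smul_basis [Finite ι] (hg : IsMultiplier ψ e g)
    {c : E} {i : ι} (hc : ∀ a, ψ a (c • e i) = c • ψ a (e i)) : c ∈ commutingField ψ := by
  obtain ⟨b, rfl⟩ := hg.surjective c
  have g_mul (a : E) : g (a * b) = g b * g a :=
    smul_left_injective E (e.ne_zero i) <| by
      simpa only [hg.apply_smul_basis, hg.apply_basis, smul_smul] using hc a
  have commute_basis (a d : E) (j : ι) : ψ a (g b • d • e j) = g b • ψ a (d • e j) := by
    obtain ⟨d, rfl⟩ := hg.surjective d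
    rw [smul_smul, ← g_mul, hg.apply_smul_basis, hg.apply_smul_basis, ← mul_assoc, g_mul, mul_smul]
  cases nonempty_fintype ι
  rw [mem_commutingField]
  intro a v
  rw [← e.sum_repr v, Finset.smul_sum, map_sum, map_sum, Finset.smul_sum]
  simp only [commute_basis]

theorem IsMultiplier.apply_eq_smul (hg : IsMultiplier ψ e g)
    (hv : v ∈ span (commutingField ψ) (Set.range e)) (a : E) : ψ a v = g a • v := by
  induction hv using span_induction with
  | mem _ h => obtain ⟨i, rfl⟩ := h; exact hg.apply_basis a i
  | zero => simp
  | add _ _ _ _ hx hy => rw [map_add, hx, hy, smul_add]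
  | smul c x _ hx =>
    rw [IntermediateField.smul_def, mem_commutingField.1 c.2, hx, smul_comm]

theorem IsMultiplier.line_eq_line (hg : IsMultiplier ψ e g)
    (hv : v ∈ span (commutingField ψ) (Set.range e)) : line ψ v = line (scalarHom F E V) v := by
  ext x
  simp only [mem_line, hg.apply_eq_smul hv]
  exact (hg.surjective.exists (p := fun c => c • v = x)).symm

-- The `j`-th coordinate shows that `ψ a` multiplies `v` by `g a`, and then the `i`-th coordinate
-- that `e.repr v i` commutes with `ψ a` on `e i`.
theorem IsMultiplier.mem_span_of_line_eq_line [Finite ι] (hg : IsMultiplier ψ e g) {j : ι}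
    (hj : e.repr v j = 1) (hv : line ψ v = line (scalarHom F E V) v) :
    v ∈ span (commutingField ψ) (Set.range e) := by
  refine (mem_span_range_iff_repr_mem _).2 fun i =>
    hg.mem_commutingField_of_apply_smul_basis (i := i) fun a => ?_
  obtain ⟨c, hc⟩ : ∃ c : E, c • v = ψ a v := hv.le ⟨a, rfl⟩
  have c_eq : c = g a := smul_left_injective E (e.ne_zero j) <| by
    simpa [← hc, hj, hg.apply_basis] using hg.repr_apply_smul a v j
  rw [← hg.repr_apply_smul, ← hc, hg.apply_basis, c_eq, map_smul, Finsupp.smul_apply, smul_eq_mul,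
    smul_smul, mul_comm]

theorem IsMultiplier.spread_inter_spread [Finite ι] (hg : IsMultiplier ψ e g) :
    spread (scalarHom F E V) ∩ spread ψ =
      line (scalarHom F E V) '' (span (commutingField ψ) (Set.range e) \ {0}) := by
  ext W
  constructor
  · rintro ⟨⟨v, hv, rfl⟩, hψ⟩
    obtain ⟨j, hj⟩ : ∃ j, e.repr v j ≠ 0 :=
      DFunLike.ne_iff.1 (e.repr.map_ne_zero_iff.2 hv)
    have hu : (e.repr v j)⁻¹ • v ≠ 0 := smul_ne_zero (inv_ne_zero hj) hv
    have line_u := line_scalarHom_smul (F := F) (inv_ne_zero hj) v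
    refine ⟨(e.repr v j)⁻¹ • v, ⟨?_, hu⟩, line_u⟩
    refine hg.mem_span_of_line_eq_line (j := j) (by simp [hj]) ?_
    rw [line_u]
    exact (eq_line_of_mem_spread hψ hu (line_u ▸ self_mem_line _ _)).symm
  · rintro ⟨v, ⟨hv, hv0⟩, rfl⟩
    refine ⟨line_mem_spread _ hv0, ?_⟩
    rw [← hg.line_eq_line hv]
    exact line_mem_spread ψ hv0

theorem IsMultiplier.commutingField_ne_top (hg : IsMultiplier ψ e g)
    (hne : spread (scalarHom F E V) ≠ spread ψ) : commutingField ψ ≠ ⊤ := fun htop => by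
  refine hne (spread_eq_of_subset ?_)
  rintro _ ⟨v, hv, rfl⟩
  have mem_span : v ∈ span (commutingField ψ) (Set.range e) :=
    (mem_span_range_iff_repr_mem _).2 fun i => htop ▸ IntermediateField.mem_top
  rw [← hg.line_eq_line mem_span]
  exact line_mem_spread ψ hv

end CommutingField

section Subgeometry

variable {F E K V ι : Type*} [Field F] [Field E] [Algebra F E] [Field K] [Algebra K E]
  [AddCommGroup V] [Module F V] [Module E V] [IsScalarTower F E V] [Module K V]
  [IsScalarTower K E V]

theorem line_eq_line_iff_of_mem_span (e : Basis ι E V) {v w : V}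
    (hv : v ∈ span K (Set.range e)) (hw : w ∈ span K (Set.range e)) (hv0 : v ≠ 0) :
    line (scalarHom F E V) v = line (scalarHom F E V) w ↔ ∃ c : K, c • w = v := by
  constructor
  · intro h
    obtain ⟨a, rfl⟩ : ∃ a : E, a • w = v := h.le (self_mem_line _ v)
    obtain ⟨j, hj⟩ : ∃ j, e.repr w j ≠ 0 :=
      DFunLike.ne_iff.1 (e.repr.map_ne_zero_iff.2 (right_ne_zero_of_smul hv0))
    obtain ⟨c, hc⟩ := (e.mem_span_iff_repr_mem K _).1 hv j
    obtain ⟨d, hd⟩ := (e.mem_span_iff_repr_mem K _).1 hw j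
    refine ⟨c / d, ?_⟩
    rw [← algebraMap_smul E, map_div₀, hc, hd, map_smul, Finsupp.smul_apply, smul_eq_mul,
      mul_div_cancel_right₀ _ hj]
  · rintro ⟨c, rfl⟩
    exact line_eq_line_of_mem hv0 ⟨algebraMap K E c, algebraMap_smul E c w⟩

theorem ncard_image_line_span [Fintype ι] (e : Basis ι E V) :
    (line (scalarHom F E V) '' (span K (Set.range e) \ {0})).ncard * (Nat.card K - 1) =
      Nat.card K ^ Fintype.card ι - 1 := by
  have line_eq_iff (v w : span K (Set.range e)) (hv : v ≠ 0) :=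
    line_eq_line_iff_of_mem_span (F := F) e v.2 w.2 (by simpa using hv)
  let toLine : ℙ K (span K (Set.range e)) → Submodule F V :=
    Projectivization.lift (fun v => line (scalarHom F E V) v.1) fun v w c h =>
      (line_eq_iff v w v.2).2 ⟨c, congrArg Subtype.val h.symm⟩
  have toLine_injective : Function.Injective toLine := fun p p' h => by
    induction p using Projectivization.ind with | h v hv =>
    induction p' using Projectivization.ind with | h w hw =>
    obtain ⟨c, hc⟩ := (line_eq_iff v w hv).1 h
    exact (Projectivization.mk_eq_mk_iff' K v w hv hw).2 ⟨c, Subtype.ext hc⟩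
  have range_toLine : Set.range toLine =
      line (scalarHom F E V) '' (span K (Set.range e) \ {0}) := by
    ext W
    constructor
    · rintro ⟨p, rfl⟩
      induction p using Projectivization.ind with | h v hv =>
      exact ⟨v, ⟨v.2, by simpa using hv⟩, rfl⟩
    · rintro ⟨v, ⟨hv, hv0⟩, rfl⟩
      exact ⟨Projectivization.mk K ⟨v, hv⟩ (by simpa using hv0), rfl⟩
  rw [← range_toLine, ← Nat.card_coe_set_eq, Nat.card_range_of_injective toLine_injective,
    ← Projectivization.card, Nat.card_congr (e.restrictScalars K).equivFun.toEquiv, Nat.card_fun,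
    Nat.card_eq_fintype_card (α := ι)]

theorem image_line_span_eq_setOf [Fintype ι] (e : Basis ι E V) :
    line (scalarHom F E V) '' (span K (Set.range e) \ {0}) =
      {W : Submodule F V | ∃ c : ι → E, (∀ i, c i ∈ Set.range (algebraMap K E)) ∧
        ∑ i, c i • e i ≠ 0 ∧ (W : Set V) = Set.range fun a : E => a • ∑ i, c i • e i} := by
  ext W
  constructor
  · rintro ⟨v, ⟨hv, hv0⟩, rfl⟩
    refine ⟨e.repr v, (e.mem_span_iff_repr_mem K v).1 hv, ?_⟩
    rw [e.sum_repr]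
    exact ⟨hv0, rfl⟩
  · rintro ⟨c, hc, hc0, hW⟩
    refine ⟨_, ⟨(e.mem_span_iff_repr_mem K _).2 ?_, hc0⟩, (eq_line_iff.2 hW).symm⟩
    simpa only [e.repr_sum_self] using hc

end Subgeometry

theorem mem_range_algebraMap_iff_pow_card {K E : Type*} [Field K] [Field E] [Finite E]
    [Algebra K E] {x : E} : x ∈ Set.range (algebraMap K E) ↔ x ^ Nat.card K = x := by
  have : Finite K := Finite.of_injective _ (algebraMap K E).injective
  constructor
  · rintro ⟨y, rfl⟩
    have := Fintype.ofFinite K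
    rw [← map_pow, Nat.card_eq_fintype_card, FiniteField.pow_card]
  · intro hx
    have := Fintype.ofFinite K
    refine (IsGalois.mem_range_algebraMap_iff_fixed (F := K) x).2 fun σ => ?_
    obtain ⟨n, rfl⟩ := (FiniteField.bijective_frobeniusAlgEquivOfAlgebraic_pow K E).2 σ
    have frobenius_mem :
        FiniteField.frobeniusAlgEquivOfAlgebraic K E ∈ MulAction.stabilizer Gal(E/K) x := by
      simpa [Nat.card_eq_fintype_card] using hx
    exact pow_mem frobenius_mem n

theorem finrank_lt_finrank_of_ne_top {F E : Type*} [Field F] [Field E] [Algebra F E]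
    [FiniteDimensional F E] {K : IntermediateField F E} (hK : K ≠ ⊤) :
    finrank F K < finrank F E :=
  lt_of_not_ge fun hle => hK <| IntermediateField.eq_of_le_of_finrank_le le_top <|
    IntermediateField.finrank_top'.trans_le hle

end DesarguesianSpread

open DesarguesianSpread

theorem stmt8_general {F E V : Type*} [Field F] [Field E] [Algebra F E] [AddCommGroup V]
    [Module F V] [Module E V] [IsScalarTower F E V] {k : ℕ} (hV : finrank E V = k)
    (ψ : E →ₐ[F] End F V) (S : Fin (k + 1) → Submodule F V) (hspan : ∀ i, ⨆ j ≠ i, S j = ⊤)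
    (hS : ∀ i, S i ∈ spread (scalarHom F E V)) (hS' : ∀ i, S i ∈ spread ψ)
    (hne : spread (scalarHom F E V) ≠ spread ψ) :
    ∃ K : IntermediateField F E, K ≠ ⊤ ∧ ∃ e : Basis (Fin k) E V,
      spread (scalarHom F E V) ∩ spread ψ =
        line (scalarHom F E V) '' (span K (Set.range e) \ {0}) := by
  choose w hw hwS using hS
  have line_eq (i) (v : V) (hv : v ≠ 0) (hvw : v ∈ E ∙ w i) :
      line (scalarHom F E V) v = line ψ v := by
    have hvS : v ∈ S i := hwS i ▸ mem_span_singleton.1 hvw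
    rw [← eq_line_of_mem_spread (hS' i) hv hvS,
      eq_line_of_mem_spread (hwS i ▸ line_mem_spread _ (hw i)) hv hvS]
  have span_eq_top (i) : span E (w '' {i}ᶜ) = ⊤ :=
    span_image_eq_top_of_iSup_line (F := F) <| by
      simpa only [hwS, Set.mem_compl_singleton_iff] using hspan i
  obtain ⟨e, he, sum_e⟩ := exists_basis_sum_eq hV w span_eq_top
  have sum_ne_zero : ∑ i, e i ≠ 0 := sum_e ▸ hw _
  obtain ⟨g, hg⟩ := exists_isMultiplier (fun i => line_eq _ _ (e.ne_zero i) (he i)) sum_ne_zero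
    (line_eq (Fin.last k) _ sum_ne_zero (sum_e ▸ mem_span_singleton_self _))
  exact ⟨commutingField ψ, hg.commutingField_ne_top hne, e, hg.spread_inter_spread⟩

/-- **main theorem.** Let `q > 2` be a prime power, `Sg` a pseudo-arc of
`PG(kh-1, q)` of size `k+1`, and `D ≠ D'` two Desarguesian `(h-1)`-spreads both
containing the pseudo-arc.  Then there is a proper divisor `r` of `h` with
`|D ∩ D'| = (q^{kr} - 1)/(q^r - 1)`; moreover there are an `F_q`-algebra homomorphism
`φ : F_{q^h} → End(V)` realising `D` as the corresponding spread and an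
`F_{q^h}`-basis `e` of `V` such that `D ∩ D'` consists exactly of the subspaces
`F_{q^h}·v` where `v` ranges over the nonzero `F_{q^r}`-linear combinations of the
basis vectors (`F_{q^r} = {c | c ^ (q^r) = c}`). -/
theorem stmt8 (q k h : ℕ) (hq : IsPrimePow q) (hq2 : 2 < q) (hk : 2 ≤ k) (hh : 2 ≤ h)
    (F : Type) [Field F] [Fintype F] (hF : Fintype.card F = q)
    (E : Type) [Field E] [Fintype E] [Algebra F E] (hE : Fintype.card E = q ^ h)
    (V : Type) [AddCommGroup V] [Module F V] (hV : Module.finrank F V = k * h)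
    (Sg : Fin (k + 1) → Submodule F V) (hinj : Function.Injective Sg)
    (hrk : ∀ i, Module.finrank F (Sg i) = h)
    (hsp : ∀ i : Fin (k + 1), (⨆ j ≠ i, Sg j) = ⊤)
    (D D' : Set (Submodule F V)) (hD : IsDesSpread E D) (hD' : IsDesSpread E D')
    (hne : D ≠ D') (hPD : ∀ i, Sg i ∈ D) (hPD' : ∀ i, Sg i ∈ D') :
    ∃ r : ℕ, r ∣ h ∧ r < h ∧
      (D ∩ D').ncard * (q ^ r - 1) = q ^ (k * r) - 1 ∧
      ∃ φ : E →ₐ[F] Module.End F V,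
        (D = {W : Submodule F V | ∃ v : V, v ≠ 0 ∧
          (W : Set V) = Set.range fun α : E => φ α v}) ∧
        ∃ e : Fin k → V,
          (∀ v : V, ∃! c : Fin k → E, v = ∑ i, φ (c i) (e i)) ∧
          D ∩ D' = {W : Submodule F V | ∃ c : Fin k → E,
            (∀ i, c i ^ q ^ r = c i) ∧ (∑ i, φ (c i) (e i)) ≠ 0 ∧
            (W : Set V) = Set.range fun α : E => φ α (∑ i, φ (c i) (e i))} := by
  obtain ⟨φ, rfl⟩ := hD
  obtain ⟨ψ, rfl⟩ := hD'
  obtain ⟨_, _, rfl⟩ := exists_scalarHom_eq φ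
  simp only [← spread_eq_setOf] at hne hPD hPD' ⊢
  have finrank_E : finrank F E = h := Nat.pow_right_injective hq.two_le <| by
    simp only [← card_eq_pow_finrank, hE, ← hF]
  have finrank_V : finrank E V = k := Nat.eq_of_mul_eq_mul_left (by lia : 0 < h) <| by
    rw [← finrank_E, finrank_mul_finrank, hV, finrank_E, mul_comm]
  obtain ⟨K, hK, e, inter_eq⟩ := stmt8_general finrank_V ψ Sg hsp hPD hPD' hne
  have card_K : Nat.card K = q ^ finrank F K := by
    rw [natCard_eq_pow_finrank (K := F), Nat.card_eq_fintype_card, hF]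
  refine ⟨finrank F K, ?_, ?_, ?_, scalarHom F E V, rfl, e, fun v => ?_, ?_⟩
  · exact finrank_E ▸ Dvd.intro _ (finrank_mul_finrank F K E)
  · exact finrank_E ▸ finrank_lt_finrank_of_ne_top hK
  · rw [inter_eq, mul_comm k, pow_mul, ← card_K]
    simpa using ncard_image_line_span (F := F) (K := K) e
  · simpa [eq_comm] using e.equivFun.symm.bijective.existsUnique v
  · rw [inter_eq, image_line_span_eq_setOf]
    simp only [mem_range_algebraMap_iff_pow_card, card_K]
    rfl
end

section
/- Let q be a prime power, k, h ≥ 2, and V a kh-dimensional F_q-vector space. A pseudo-arc P of PG(V) is contained in some Desarguesian (h-1)-spread of PG(V) if and only if there exists an F_q-algebra homomorphism φ : F_{q^h} → End_{F_q}(V) such that every member Σ of P is invariant under φ(α) for all α ∈ F_{q^h} (i.e. each Σ ∈ P is an F_{q^h}-submodule of V for the module structure induced by φ). This is the statement that a pseudo-arc is Desarguesian if and only if it is fixed elementwise by a Singer subgroup of PG(kh-1,q) of order (q^h-1)/(q-1), such subgroups being precisely the projective images of the groups of F_{q^h}-scalar multiplications on V for some F_{q^h}-structure on V. -/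
/-!
A nonzero vector `v` has trivial annihilator in a field `E` acting on `V`, so `E · v` has
`F`-dimension `[E : F]`. Hence a subspace of dimension `[E : F]` that is stable under `E` equals
`E · v` for each of its nonzero vectors `v`.
-/

section CyclicSubmodule

variable {R A M : Type*} [CommSemiring R] [Semiring A] [Algebra R A] [AddCommMonoid M] [Module R M]

/-- The cyclic submodule `A · v` generated by `v` under the action of the `R`-algebra `A` on `M`
given by `φ`, regarded as an `R`-submodule. For a field `A` and `v ≠ 0` these are the members of
the Desarguesian spread of `φ`. The action is kept as a homomorphism `φ`, rather than an `A`-module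
instance on `M`, because the theorem quantifies over it. -/
def cyclicSubmodule (φ : A →ₐ[R] Module.End R M) (v : M) : Submodule R M :=
  LinearMap.range (φ.toLinearMap.flip v)

theorem coe_cyclicSubmodule (φ : A →ₐ[R] Module.End R M) (v : M) :
    (cyclicSubmodule φ v : Set M) = Set.range fun a => φ a v :=
  rfl

theorem apply_mem_cyclicSubmodule (φ : A →ₐ[R] Module.End R M) (a : A) {v w : M}
    (hw : w ∈ cyclicSubmodule φ v) : φ a w ∈ cyclicSubmodule φ v := by
  obtain ⟨b, rfl⟩ := hw
  exact ⟨a * b, by simp⟩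

theorem cyclicSubmodule_le {φ : A →ₐ[R] Module.End R M} {W : Submodule R M}
    (hW : ∀ a, ∀ w ∈ W, φ a w ∈ W) {v : M} (hv : v ∈ W) : cyclicSubmodule φ v ≤ W := by
  rintro _ ⟨a, rfl⟩
  exact hW a v hv

end CyclicSubmodule

theorem injective_flip_algHom_of_ne_zero {R K M : Type*} [CommSemiring R] [DivisionRing K]
    [Algebra R K] [AddCommMonoid M] [Module R M] (φ : K →ₐ[R] Module.End R M) {v : M} (hv : v ≠ 0) :
    Function.Injective (φ.toLinearMap.flip v) := by
  rw [injective_iff_map_eq_zero]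
  intro a (ha : φ a v = 0)
  by_contra ha₀
  refine hv ?_
  calc v = φ (a⁻¹ * a) v := by rw [inv_mul_cancel₀ ha₀, map_one, Module.End.one_apply]
    _ = φ a⁻¹ (φ a v) := by rw [map_mul, Module.End.mul_apply]
    _ = 0 := by rw [ha, map_zero]

theorem finrank_cyclicSubmodule {R K M : Type*} [CommSemiring R] [DivisionRing K]
    [Algebra R K] [AddCommMonoid M] [Module R M] (φ : K →ₐ[R] Module.End R M) {v : M} (hv : v ≠ 0) :
    Module.finrank R (cyclicSubmodule φ v) = Module.finrank R K :=
  LinearMap.finrank_range_of_inj (injective_flip_algHom_of_ne_zero φ hv)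

theorem exists_eq_cyclicSubmodule_iff {F K V : Type*} [Field F] [DivisionRing K] [Algebra F K]
    [FiniteDimensional F K] [AddCommGroup V] [Module F V] (φ : K →ₐ[F] Module.End F V)
    {W : Submodule F V} (hW : Module.finrank F W = Module.finrank F K) :
    (∃ v, v ≠ 0 ∧ W = cyclicSubmodule φ v) ↔ ∀ a, ∀ w ∈ W, φ a w ∈ W := by
  constructor
  · rintro ⟨v, -, rfl⟩ a w hw
    exact apply_mem_cyclicSubmodule φ a hw
  · intro hinv
    have hpos : 0 < Module.finrank F W := hW ▸ Module.finrank_pos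
    have : FiniteDimensional F W := Module.finite_of_finrank_pos hpos
    have hne : W ≠ ⊥ := Submodule.one_le_finrank_iff.mp hpos
    obtain ⟨v, hvW, hv⟩ := W.exists_mem_ne_zero_of_ne_bot hne
    have hrank : Module.finrank F (cyclicSubmodule φ v) = Module.finrank F W :=
      (finrank_cyclicSubmodule φ hv).trans hW.symm
    exact ⟨v, hv, (Submodule.eq_of_le_of_finrank_eq (cyclicSubmodule_le hinv hvW) hrank).symm⟩

theorem isDesSpread_iff_exists_cyclicSubmodule {F E V : Type} [Field F] [Field E] [Algebra F E]
    [AddCommGroup V] [Module F V] {D : Set (Submodule F V)} :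
    IsDesSpread E D ↔
      ∃ φ : E →ₐ[F] Module.End F V, D = {W | ∃ v, v ≠ 0 ∧ W = cyclicSubmodule φ v} := by
  simp only [IsDesSpread, ← coe_cyclicSubmodule, SetLike.coe_set_eq]

theorem finrank_eq_of_card_eq_pow {F V : Type*} [Field F] [Fintype F] [AddCommGroup V] [Module F V]
    [Fintype V] {n : ℕ} (hV : Fintype.card V = Fintype.card F ^ n) : Module.finrank F V = n :=
  Nat.pow_right_injective Fintype.one_lt_card (Module.card_eq_pow_finrank.symm.trans hV)

theorem stmt11_general {F E V : Type} [Field F] [Field E] [Algebra F E] [FiniteDimensional F E]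
    [AddCommGroup V] [Module F V] {P : Set (Submodule F V)}
    (hP : ∀ W ∈ P, Module.finrank F W = Module.finrank F E) :
    (∃ D : Set (Submodule F V), IsDesSpread E D ∧ P ⊆ D) ↔
    (∃ φ : E →ₐ[F] Module.End F V, ∀ W ∈ P, ∀ α : E, ∀ v ∈ W, φ α v ∈ W) := by
  calc (∃ D : Set (Submodule F V), IsDesSpread E D ∧ P ⊆ D)
    _ ↔ ∃ φ : E →ₐ[F] Module.End F V, ∀ W ∈ P, ∃ v, v ≠ 0 ∧ W = cyclicSubmodule φ v := by
      simp only [isDesSpread_iff_exists_cyclicSubmodule]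
      exact ⟨fun ⟨_, ⟨φ, hD⟩, hPD⟩ => ⟨φ, fun W hW => (hD ▸ hPD) hW⟩,
        fun ⟨φ, hφ⟩ => ⟨_, ⟨φ, rfl⟩, hφ⟩⟩
    _ ↔ ∃ φ : E →ₐ[F] Module.End F V, ∀ W ∈ P, ∀ α : E, ∀ v ∈ W, φ α v ∈ W :=
      exists_congr fun φ => forall₂_congr fun W hW => exists_eq_cyclicSubmodule_iff φ (hP W hW)

/-- A pseudo-arc `P` of `PG(V)` (a set of `h`-dimensional subspaces
of the `kh`-dimensional `F_q`-space `V` any `k` of which span `V`) is contained in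
some Desarguesian `(h-1)`-spread of `PG(V)` if and only if there is an `F_q`-algebra
homomorphism `φ : F_{q^h} → End_{F_q}(V)` leaving every member of `P` invariant, i.e.
each member of `P` is an `F_{q^h}`-submodule for the structure induced by `φ`.
(This is the fixing-by-a-Singer-subgroup characterization.) -/
theorem stmt11 (q k h : ℕ) (hq : IsPrimePow q) (hk : 2 ≤ k) (hh : 2 ≤ h)
    (F : Type) [Field F] [Fintype F] (hF : Fintype.card F = q)
    (E : Type) [Field E] [Fintype E] [Algebra F E] (hE : Fintype.card E = q ^ h)
    (V : Type) [AddCommGroup V] [Module F V] (hV : Module.finrank F V = k * h)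
    (P : Set (Submodule F V))
    (hrk : ∀ W ∈ P, Module.finrank F W = h)
    (hsp : ∀ T ⊆ P, T.ncard = k → sSup T = ⊤) :
    (∃ D : Set (Submodule F V), IsDesSpread E D ∧ P ⊆ D) ↔
    (∃ φ : E →ₐ[F] Module.End F V, ∀ W ∈ P, ∀ α : E, ∀ v ∈ W, φ α v ∈ W) := by
  subst hF
  exact stmt11_general fun W hW => (hrk W hW).trans (finrank_eq_of_card_eq_pow hE).symm
end

section
/- Let q be a prime power, k, h ≥ 1, and let r be a proper divisor of h. In V = F_{q^h}^k regarded as an F_q-vector space, for λ ∈ F_{q^h}^* let W_λ = { λv : v ∈ F_{q^r}^k }, a kr-dimensional F_q-subspace of V. Then: (i) W_λ = W_μ if and only if λμ^{-1} ∈ F_{q^r}^*; (ii) distinct subspaces W_λ, W_μ intersect trivially; (iii) there are exactly (q^h - 1)/(q^r - 1) distinct subspaces among the W_λ; and (iv) the union of the W_λ \ {0} equals the set of nonzero vectors lying in some F_{q^h}·v with v ∈ F_{q^r}^k \ {0}, i.e. the W_λ form a system of (q^h-1)/(q^r-1) mutually disjoint (kr-1)-dimensional projective subspaces partitioning the point set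 of the generalized Segre variety S^r_{kr-1,h-1}(q). -/
/-- The subset `W_λ = λ · F_{q^r}^k` of `F_{q^h}^k`, where
`F_{q^r} = {x | x ^ (q^r) = x}`. -/
def Wlam (q r k : ℕ) {E : Type} [Field E] (lam : E) : Set (Fin k → E) :=
  {x | ∃ u : Fin k → E, (∀ i, u i ^ q ^ r = u i) ∧ x = lam • u}

/-!
Let `K` be the fixed field of `x ↦ x ^ q ^ r` in `E`. Since the `q`-Frobenius generates the cyclic
group `Gal(E/F)` of order `h`, the Galois correspondence gives `[K : F] = r`. The sets `W_λ` are the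
translates of `K ^ k` under the scalar action of `Eˣ`. If a scalar carries a nonzero vector of
`K ^ k` to a vector of `K ^ k`, then it is a quotient of coordinates, hence lies in `K`. So two
translates that share a nonzero vector coincide, the stabilizer of `K ^ k` is `Kˣ`, and the
orbit-stabilizer theorem counts the translates.
-/

open Module MulAction FiniteField IntermediateField
open scoped Pointwise

section RationalVectors

variable {F L : Type*} [Field F] [Field L] [Algebra F L] (K : IntermediateField F L) (ι : Type*)

/-- The `F`-subspace `K ^ ι` of `L ^ ι`: the vectors that are rational over the intermediate
field `K`. Its translates `a • K ^ ι` by `a : Lˣ` are the subspaces `W_a`. -/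
def rationalVectors : Submodule F (ι → L) :=
  Submodule.pi Set.univ fun _ ↦ Subalgebra.toSubmodule K.toSubalgebra

variable {K ι}

theorem mem_rationalVectors {u : ι → L} : u ∈ rationalVectors K ι ↔ ∀ i, u i ∈ K := by
  simp [rationalVectors]

variable (K ι) in
theorem finrank_rationalVectors [Fintype ι] :
    finrank F (rationalVectors K ι) = Fintype.card ι * finrank F K := by
  have range_eq : LinearMap.range (K.val.toLinearMap.compLeft ι) = rationalVectors K ι := by
    ext u
    simp [LinearMap.range_compLeft, mem_rationalVectors]
  have injective : Function.Injective (K.val.toLinearMap.compLeft ι) :=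
    Subtype.val_injective.comp_left
  rw [← range_eq, LinearMap.finrank_range_of_inj injective, finrank, rank_fun_eq_lift_mul,
    map_mul, Cardinal.toNat_natCast, Cardinal.toNat_lift, finrank]

theorem finrank_units_smul_rationalVectors [Fintype ι] (a : Lˣ) :
    finrank F ↥(a • rationalVectors K ι) = Fintype.card ι * finrank F K :=
  ((DistribMulAction.toLinearEquiv F (ι → L) a).finrank_map_eq _).trans
    (finrank_rationalVectors K ι)

theorem smul_mem_rationalVectors {c : L} {u : ι → L} (hc : c ∈ K) (hu : u ∈ rationalVectors K ι) :
    c • u ∈ rationalVectors K ι :=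
  mem_rationalVectors.2 fun i ↦ K.mul_mem hc (mem_rationalVectors.1 hu i)

theorem mem_of_smul_mem_rationalVectors {c : L} {u : ι → L} (hu : u ∈ rationalVectors K ι)
    (hu₀ : u ≠ 0) (hcu : c • u ∈ rationalVectors K ι) : c ∈ K := by
  obtain ⟨i, hi⟩ := Function.ne_iff.1 hu₀
  have quotient_mem : (c • u) i / u i ∈ K :=
    K.div_mem (mem_rationalVectors.1 hcu i) (mem_rationalVectors.1 hu i)
  rwa [Pi.smul_apply, smul_eq_mul, mul_div_cancel_right₀ c hi] at quotient_mem

theorem units_smul_rationalVectors_of_mem {a : Lˣ} (ha : (a : L) ∈ K) :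
    a • rationalVectors K ι = rationalVectors K ι := by
  refine le_antisymm ?_ fun u hu ↦ ?_
  · rintro _ ⟨u, hu, rfl⟩
    exact smul_mem_rationalVectors ha hu
  · refine ⟨a⁻¹ • u, smul_mem_rationalVectors ?_ hu, smul_inv_smul a u⟩
    rw [Units.val_inv_eq_inv_val]
    exact K.inv_mem ha

theorem mem_stabilizer_rationalVectors_iff [Nonempty ι] {a : Lˣ} :
    a ∈ stabilizer Lˣ (rationalVectors K ι) ↔ (a : L) ∈ K := by
  refine ⟨fun ha ↦ ?_, units_smul_rationalVectors_of_mem⟩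
  have one_mem : (1 : ι → L) ∈ rationalVectors K ι := mem_rationalVectors.2 fun _ ↦ K.one_mem
  have smul_one_mem : (a : L) • (1 : ι → L) ∈ rationalVectors K ι :=
    (mem_stabilizer_iff.1 ha).le (Submodule.smul_mem_pointwise_smul _ a _ one_mem)
  exact mem_of_smul_mem_rationalVectors one_mem one_ne_zero smul_one_mem

variable (K ι) in
theorem stabilizer_rationalVectors [Nonempty ι] :
    stabilizer Lˣ (rationalVectors K ι) = (Units.map (K.val : K →* L)).range := by
  ext a
  rw [mem_stabilizer_rationalVectors_iff]
  constructor
  · intro ha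
    exact ⟨Units.mk0 ⟨a, ha⟩ fun h ↦ a.ne_zero (congrArg Subtype.val h), Units.ext rfl⟩
  · rintro ⟨b, rfl⟩
    exact (b : K).2

theorem units_smul_rationalVectors_eq_iff [Nonempty ι] {a b : Lˣ} :
    a • rationalVectors K ι = b • rationalVectors K ι ↔ (a : L) * (b : L)⁻¹ ∈ K := by
  rw [← inv_smul_eq_iff, smul_smul, ← mem_stabilizer_iff, mem_stabilizer_rationalVectors_iff,
    Units.val_mul, Units.val_inv_eq_inv_val, mul_comm]

theorem disjoint_units_smul_rationalVectors {a b : Lˣ}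
    (hab : a • rationalVectors K ι ≠ b • rationalVectors K ι) :
    Disjoint (a • rationalVectors K ι) (b • rationalVectors K ι) := by
  rw [Submodule.disjoint_def]
  rintro _ ⟨u, hu, rfl⟩ ⟨v, hv, hvu : b • v = a • u⟩
  by_contra hau
  have smul_u_eq : ((b⁻¹ * a : Lˣ) : L) • u = v := by
    rw [← Units.smul_def, mul_smul, ← hvu, inv_smul_smul]
  have ratio_mem : ((b⁻¹ * a : Lˣ) : L) ∈ K :=
    mem_of_smul_mem_rationalVectors hu (right_ne_zero_of_smul hau) (smul_u_eq ▸ hv)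
  apply hab
  rw [← inv_smul_eq_iff, smul_smul, units_smul_rationalVectors_of_mem ratio_mem]

variable (K ι) in
theorem ncard_orbit_rationalVectors_mul [Nonempty ι] [Finite L] :
    (orbit Lˣ (rationalVectors K ι)).ncard * (Nat.card K - 1) = Nat.card L - 1 := by
  have card_stabilizer : Nat.card (stabilizer Lˣ (rationalVectors K ι)) = Nat.card K - 1 := by
    rw [stabilizer_rationalVectors, ← Nat.card_units]
    have units_map_injective := Units.map_injective (f := (K.val : K →* L)) K.val.injective
    exact Nat.card_congr (MonoidHom.ofInjective units_map_injective).symm.toEquiv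
  rw [← index_stabilizer, ← card_stabilizer, Subgroup.index_mul_card, Nat.card_units]

end RationalVectors

section FrobeniusFixedField

variable (F L : Type*) [Field F] [Fintype F] [Field L] [Algebra F L]

/-- The subfield of `L` fixed by the `r`-th power of the Frobenius `x ↦ x ^ |F|`, as an intermediate
field of `L / F`. It is `F_{q^r}` inside `F_{q^h}` when `r ∣ h`. -/
noncomputable def frobeniusFixedField [Algebra.IsAlgebraic F L] (r : ℕ) : IntermediateField F L :=
  fixedField (Subgroup.zpowers (frobeniusAlgEquivOfAlgebraic F L ^ r))

variable {F L} in
theorem mem_frobeniusFixedField [Algebra.IsAlgebraic F L] {r : ℕ} {x : L} :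
    x ∈ frobeniusFixedField F L r ↔ x ^ Fintype.card F ^ r = x := by
  have frobenius_pow_apply :
      (frobeniusAlgEquivOfAlgebraic F L ^ r) x = x ^ Fintype.card F ^ r := by
    rw [AlgEquiv.coe_pow, coe_frobeniusAlgEquivOfAlgebraic_iterate]
  rw [frobeniusFixedField, mem_fixedField_iff, ← frobenius_pow_apply]
  refine ⟨fun hx ↦ hx _ (Subgroup.mem_zpowers _), fun hx ↦ ?_⟩
  exact Subgroup.zpowers_le.2 (mem_stabilizer_iff.2 hx)

theorem finrank_frobeniusFixedField [Finite L] (r : ℕ) :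
    finrank F (frobeniusFixedField F L r) = (finrank F L).gcd r := by
  have degree_over_fixedField :
      finrank (frobeniusFixedField F L r) L = finrank F L / (finrank F L).gcd r := by
    rw [frobeniusFixedField, finrank_fixedField_eq_card, Nat.card_zpowers, orderOf_pow,
      orderOf_frobeniusAlgEquivOfAlgebraic]
  have tower := finrank_mul_finrank F (frobeniusFixedField F L r) L
  have gcd_dvd : (finrank F L).gcd r ∣ finrank F L := Nat.gcd_dvd_left _ _
  have degree_pos : 0 < finrank F L / (finrank F L).gcd r := degree_over_fixedField ▸ finrank_pos
  refine Nat.eq_of_mul_eq_mul_right degree_pos ?_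
  rw [Nat.mul_div_cancel' gcd_dvd, ← degree_over_fixedField, tower]

theorem natCard_frobeniusFixedField [Finite L] (r : ℕ) :
    Nat.card (frobeniusFixedField F L r) = Fintype.card F ^ (finrank F L).gcd r := by
  rw [natCard_eq_pow_finrank (K := F), Nat.card_eq_fintype_card, finrank_frobeniusFixedField]

end FrobeniusFixedField

section Wlam

theorem setOf_mem_Wlam_and_ne_zero (q r k : ℕ) {E : Type} [Field E] :
    {x : Fin k → E | (∃ lam : E, lam ≠ 0 ∧ x ∈ Wlam q r k lam) ∧ x ≠ 0} =
      {x : Fin k → E | x ≠ 0 ∧ ∃ u : Fin k → E, u ≠ 0 ∧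
        (∀ i, u i ^ q ^ r = u i) ∧ ∃ α : E, x = α • u} := by
  ext x
  constructor
  · rintro ⟨⟨lam, -, u, hu, rfl⟩, hx⟩
    exact ⟨hx, u, right_ne_zero_of_smul hx, hu, lam, rfl⟩
  · rintro ⟨hx, u, -, hu, α, rfl⟩
    exact ⟨⟨α, left_ne_zero_of_smul hx, u, hu, rfl⟩, hx⟩

variable (F : Type*) {E : Type} [Field F] [Fintype F] [Field E] [Algebra F E]
  (r k : ℕ)

theorem coe_units_smul_rationalVectors_frobeniusFixedField [Algebra.IsAlgebraic F E] (a : Eˣ) :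
    (↑(a • rationalVectors (frobeniusFixedField F E r) (Fin k)) : Set (Fin k → E)) =
      Wlam (Fintype.card F) r k (a : E) := by
  ext x
  simp only [SetLike.mem_coe, Submodule.mem_smul_pointwise_iff_exists, mem_rationalVectors,
    mem_frobeniusFixedField, Wlam, Set.mem_ofPred_eq, Units.smul_def, eq_comm]

theorem ncard_setOf_eq_Wlam_mul [Finite E] [NeZero k] :
    {T : Set (Fin k → E) | ∃ lam : E, lam ≠ 0 ∧ T = Wlam (Fintype.card F) r k lam}.ncard *
      (Fintype.card F ^ (finrank F E).gcd r - 1) = Nat.card E - 1 := by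
  have eq_image_orbit :
      {T : Set (Fin k → E) | ∃ lam : E, lam ≠ 0 ∧ T = Wlam (Fintype.card F) r k lam} =
        (↑) '' orbit Eˣ (rationalVectors (frobeniusFixedField F E r) (Fin k)) := by
    ext T
    simp only [← Units.exists_iff_ne_zero, ← coe_units_smul_rationalVectors_frobeniusFixedField,
      orbit, Set.mem_ofPred_eq, Set.exists_range_iff, Set.mem_image, eq_comm]
  rw [eq_image_orbit, Set.ncard_image_of_injective _ SetLike.coe_injective,
    ← natCard_frobeniusFixedField, ncard_orbit_rationalVectors_mul]

end Wlam

/-- Let `r` be a proper divisor of `h` and, for `λ ∈ F_{q^h}^*`, let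
`W_λ = λ·F_{q^r}^k ⊆ V = F_{q^h}^k`.  Then: each `W_λ` is a `kr`-dimensional
`F_q`-subspace of `V`; `W_λ = W_μ` iff `λμ⁻¹ ∈ F_{q^r}^*`; distinct `W_λ, W_μ`
intersect trivially; there are exactly `(q^h - 1)/(q^r - 1)` distinct such subspaces;
and the union of the `W_λ \ {0}` is exactly the set of nonzero vectors lying in some
`F_{q^h}·u` with `u ∈ F_{q^r}^k \ {0}`, i.e. the `W_λ` form a system of mutually
disjoint `(kr-1)`-dimensional projective subspaces partitioning the point set of the
generalized Segre variety `S^r_{kr-1,h-1}(q)`. -/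
theorem stmt14 (q k h r : ℕ) (hq : IsPrimePow q) (hk : 1 ≤ k) (hh : 1 ≤ h)
    (hr : r ∣ h) (hrlt : r < h)
    (F : Type) [Field F] [Fintype F] (hF : Fintype.card F = q)
    (E : Type) [Field E] [Fintype E] [Algebra F E] (hE : Fintype.card E = q ^ h) :
    (∀ lam : E, lam ≠ 0 → ∃ W : Submodule F (Fin k → E),
      (W : Set (Fin k → E)) = Wlam q r k lam ∧ Module.finrank F W = k * r) ∧
    (∀ lam mu : E, lam ≠ 0 → mu ≠ 0 →
      (Wlam q r k lam = Wlam q r k mu ↔ (lam * mu⁻¹) ^ q ^ r = lam * mu⁻¹)) ∧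
    (∀ lam mu : E, lam ≠ 0 → mu ≠ 0 → Wlam q r k lam ≠ Wlam q r k mu →
      Wlam q r k lam ∩ Wlam q r k mu = {0}) ∧
    ({T : Set (Fin k → E) | ∃ lam : E, lam ≠ 0 ∧ T = Wlam q r k lam}.ncard
      * (q ^ r - 1) = q ^ h - 1) ∧
    ({x : Fin k → E | (∃ lam : E, lam ≠ 0 ∧ x ∈ Wlam q r k lam) ∧ x ≠ 0} =
      {x : Fin k → E | x ≠ 0 ∧ ∃ u : Fin k → E, u ≠ 0 ∧
        (∀ i, u i ^ q ^ r = u i) ∧ ∃ α : E, x = α • u}) := by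
  subst hF
  have : NeZero k := ⟨Nat.one_le_iff_ne_zero.1 hk⟩
  have finrank_E : finrank F E = h :=
    Nat.pow_right_injective Fintype.one_lt_card (card_eq_pow_finrank.symm.trans hE)
  have gcd_eq : (finrank F E).gcd r = r := by rw [finrank_E, Nat.gcd_eq_right hr]
  have coe_smul := coe_units_smul_rationalVectors_frobeniusFixedField (E := E) F r k
  refine ⟨fun lam hlam ↦ ?_, fun lam mu hlam hmu ↦ ?_, fun lam mu hlam hmu hne ↦ ?_, ?_,
    setOf_mem_Wlam_and_ne_zero _ r k⟩
  · lift lam to Eˣ using hlam.isUnit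
    refine ⟨_, coe_smul lam, ?_⟩
    rw [finrank_units_smul_rationalVectors, Fintype.card_fin, finrank_frobeniusFixedField,
      gcd_eq]
  · lift lam to Eˣ using hlam.isUnit
    lift mu to Eˣ using hmu.isUnit
    rw [← coe_smul, ← coe_smul, SetLike.coe_set_eq, units_smul_rationalVectors_eq_iff,
      mem_frobeniusFixedField]
  · lift lam to Eˣ using hlam.isUnit
    lift mu to Eˣ using hmu.isUnit
    rw [← coe_smul, ← coe_smul, Ne, SetLike.coe_set_eq] at hne
    rw [← coe_smul, ← coe_smul, ← Submodule.coe_inf,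
      (disjoint_units_smul_rationalVectors hne).eq_bot, Submodule.bot_coe]
  · rw [← hE, ← Nat.card_eq_fintype_card (α := E), ← ncard_setOf_eq_Wlam_mul F r k, gcd_eq]
end

section
/- Assume q > 2 is a prime power and h ≥ 1. If S is a set of at least three points of PG(1,q^h) such that for any three distinct points of S the unique q-order subline through them is entirely contained in S, then S is a q^r-order subline of PG(1,q^h) for some divisor r of h. -/
/-- `T` is a subline of order `m` of `PG(1, E)`: there are linearly independent
vectors `u, w` of `E^2` such that `T` consists exactly of the points
`[c u + d w]` with coordinates `c, d` in the subfield `{x : E | x ^ m = x}`,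
not both zero. -/
def IsSubline {E : Type} [Field E] (m : ℕ)
    (T : Set (Projectivization E (Fin 2 → E))) : Prop :=
  ∃ u w : Fin 2 → E, LinearIndependent E ![u, w] ∧
    T = {p | ∃ c d : E, c ^ m = c ∧ d ^ m = d ∧
      ∃ hx : c • u + d • w ≠ 0, p = Projectivization.mk E (c • u + d • w) hx}

/-!
Move three points of `S` to `∞ = [u]`, `0 = [w]` and `1 = [u + w]`, and let `A` be the set of
affine coordinates of the other points of `S`, so that `S = A ∪ {∞}`. The sublines over `F` through
`∞` are the affine `F`-lines, so `A` is an `F`-subspace once `F` has an element other than `0` and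
`1`. Exchanging `0` and `∞`, the set `A⁻¹` is an `F`-subspace as well, and Hua's identity
`a - (a⁻¹ + (b⁻¹ - a)⁻¹)⁻¹ = a² b` shows that `A` is closed under inversion and under
`(a, b) ↦ a² b`. Products are recovered by polarisation if `2 ≠ 0`, and otherwise, for finite `A`,
because every element of `A` is a square in `A`. Hence `A` is a field between `F` and `E`.
-/

open scoped LinearAlgebra.Projectivization
open Module

section AffineClosed

variable {F M : Type*} [DivisionRing F] [AddCommGroup M] [Module F M]

theorem exists_submodule_coe_eq_of_lineMap_mem (hF : 3 ≤ ENat.card F) {A : Set M}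
    (zero_mem : 0 ∈ A) (lineMap_mem : ∀ a ∈ A, ∀ b ∈ A, ∀ t : F, AffineMap.lineMap a b t ∈ A) :
    ∃ N : Submodule F M, (N : Set M) = A := by
  have smul_mem (t : F) {a : M} (ha : a ∈ A) : t • a ∈ A := by
    simpa [AffineMap.lineMap_apply_module] using lineMap_mem 0 zero_mem a ha t
  obtain ⟨t, ht0, ht1⟩ := ENat.exists_ne_ne_of_three_le hF 0 1
  have h1t : 1 - t ≠ 0 := sub_ne_zero.2 ht1.symm
  have add_mem {a b : M} (ha : a ∈ A) (hb : b ∈ A) : a + b ∈ A := by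
    simpa [AffineMap.lineMap_apply_module, smul_smul, ht0, h1t] using
      lineMap_mem _ (smul_mem (1 - t)⁻¹ ha) _ (smul_mem t⁻¹ hb) t
  exact ⟨{ carrier := A
           add_mem' := add_mem
           zero_mem' := zero_mem
           smul_mem' := fun t _ => smul_mem t }, rfl⟩

end AffineClosed

section InvClosed

variable {E : Type*} [Field E] {A B : AddSubgroup E} {a b : E}

theorem sub_inv_add_inv_sub_inv_inv (ha : a ≠ 0) (hb : b ≠ 0) (hab : a * b ≠ 1) :
    a - (a⁻¹ + (b⁻¹ - a)⁻¹)⁻¹ = a ^ 2 * b := by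
  have hab' : 1 - a * b ≠ 0 := sub_ne_zero.2 hab.symm
  have hdiff : b⁻¹ - a = (1 - a * b) / b := by field_simp
  have hsum : a⁻¹ + (b⁻¹ - a)⁻¹ = 1 / (a * (1 - a * b)) := by
    rw [hdiff]
    field_simp
    ring
  rw [hsum]
  field_simp
  ring

theorem sq_mul_mem_of_mem_iff_inv_mem (hAB : ∀ x, x ∈ A ↔ x⁻¹ ∈ B) (ha : a ∈ A) (hb : b ∈ B) :
    a ^ 2 * b ∈ A := by
  have inv_mem {x : E} (hx : x ∈ B) : x⁻¹ ∈ A := (hAB _).2 (by rwa [inv_inv])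
  rcases eq_or_ne a 0 with rfl | ha0
  · simp
  rcases eq_or_ne b 0 with rfl | hb0
  · simp
  rcases eq_or_ne (a * b) 1 with hab | hab
  · rwa [sq, mul_assoc, hab, mul_one]
  · rw [← sub_inv_add_inv_sub_inv_inv ha0 hb0 hab]
    have hdiff : b⁻¹ - a ∈ A := A.sub_mem (inv_mem hb) ha
    exact A.sub_mem ha (inv_mem (B.add_mem ((hAB a).1 ha) ((hAB _).1 hdiff)))

theorem inv_mem_of_mem_iff_inv_mem (hAB : ∀ x, x ∈ A ↔ x⁻¹ ∈ B) (one_mem : 1 ∈ A) (ha : a ∈ A) :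
    a⁻¹ ∈ A := by
  simpa using sq_mul_mem_of_mem_iff_inv_mem hAB one_mem ((hAB a).1 ha)

theorem sq_mul_mem_of_inv_mem (inv_mem : ∀ x ∈ A, x⁻¹ ∈ A) (ha : a ∈ A) (hb : b ∈ A) :
    a ^ 2 * b ∈ A :=
  sq_mul_mem_of_mem_iff_inv_mem
    (fun x => ⟨inv_mem x, fun hx => by simpa using inv_mem _ hx⟩) ha hb

theorem mul_mem_of_inv_mem_of_two_ne_zero (one_mem : 1 ∈ A) (inv_mem : ∀ x ∈ A, x⁻¹ ∈ A)
    (h2 : (2 : E) ≠ 0) (ha : a ∈ A) (hb : b ∈ A) : a * b ∈ A := by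
  have sq_mem {x : E} (hx : x ∈ A) : x ^ 2 ∈ A := by
    simpa using sq_mul_mem_of_inv_mem inv_mem hx one_mem
  have half_mem : (2 : E)⁻¹ ∈ A :=
    inv_mem 2 (one_add_one_eq_two (R := E) ▸ A.add_mem one_mem one_mem)
  have two_mul_mem : (a + b) ^ 2 - a ^ 2 - b ^ 2 ∈ A :=
    A.sub_mem (A.sub_mem (sq_mem (A.add_mem ha hb)) (sq_mem ha)) (sq_mem hb)
  have quarter_mem := sq_mul_mem_of_inv_mem inv_mem half_mem two_mul_mem
  convert A.add_mem quarter_mem quarter_mem using 1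
  field_simp
  ring

theorem mul_mem_of_inv_mem_of_finite (one_mem : 1 ∈ A) (inv_mem : ∀ x ∈ A, x⁻¹ ∈ A)
    (h2 : (2 : E) = 0) (hfin : (A : Set E).Finite) (ha : a ∈ A) (hb : b ∈ A) : a * b ∈ A := by
  have : CharP E 2 := CharTwo.of_one_ne_zero_of_two_eq_zero one_ne_zero h2
  have : Finite A := hfin
  have sq_mem (x : A) : (x : E) ^ 2 ∈ A := by
    simpa using sq_mul_mem_of_inv_mem inv_mem x.2 one_mem
  have sq_injective : Function.Injective fun x : A => (⟨(x : E) ^ 2, sq_mem x⟩ : A) :=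
    fun x y hxy => Subtype.ext (CharTwo.sq_injective (congrArg Subtype.val hxy))
  obtain ⟨c, hc⟩ := Finite.surjective_of_injective sq_injective ⟨a, ha⟩
  obtain rfl : (c : E) ^ 2 = a := congrArg Subtype.val hc
  exact sq_mul_mem_of_inv_mem inv_mem c.2 hb

theorem exists_intermediateField_coe_eq_of_mem_iff_inv_mem {F : Type*} [Field F] [Algebra F E]
    {A B : Submodule F E} (hAB : ∀ x, x ∈ A ↔ x⁻¹ ∈ B) (one_mem : 1 ∈ A)
    (hA : (2 : E) ≠ 0 ∨ (A : Set E).Finite) :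
    ∃ K : IntermediateField F E, (K : Set E) = A := by
  have inv_mem (x : E) (hx : x ∈ A) : x⁻¹ ∈ A :=
    inv_mem_of_mem_iff_inv_mem (A := A.toAddSubgroup) (B := B.toAddSubgroup) hAB one_mem hx
  have mul_mem (x y : E) (hx : x ∈ A) (hy : y ∈ A) : x * y ∈ A := by
    by_cases h2 : (2 : E) = 0
    · exact mul_mem_of_inv_mem_of_finite (A := A.toAddSubgroup) one_mem inv_mem h2
        (hA.resolve_left (not_not_intro h2)) hx hy
    · exact mul_mem_of_inv_mem_of_two_ne_zero (A := A.toAddSubgroup) one_mem inv_mem h2 hx hy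
  exact ⟨(A.toSubalgebra one_mem mul_mem).toIntermediateField inv_mem, rfl⟩

end InvClosed

section ProjectiveLine

variable {E V : Type*} [Field E] [AddCommGroup V] [Module E V]

/-- `T` is a subline of the projective line `ℙ E V` over the subfield `K`: it consists of the points
with coordinates in `K` with respect to some pair of independent vectors. -/
def IsSublineOver (K : Subfield E) (T : Set (ℙ E V)) : Prop :=
  ∃ u w : V, LinearIndependent E ![u, w] ∧
    T = {p | ∃ c ∈ K, ∃ d ∈ K, ∃ hx : c • u + d • w ≠ 0, p = .mk E (c • u + d • w) hx}

/-- `S` contains every subline over `F` that meets it in three or more points. -/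
def IsSublineClosed (F : Subfield E) (S : Set (ℙ E V)) : Prop :=
  ∀ p₁ p₂ p₃, p₁ ∈ S → p₂ ∈ S → p₃ ∈ S → p₁ ≠ p₂ → p₁ ≠ p₃ → p₂ ≠ p₃ →
    ∀ T, IsSublineOver F T → p₁ ∈ T → p₂ ∈ T → p₃ ∈ T → T ⊆ S

/-- The cone over a set `S` of projective points, without its apex `0`: the nonzero vectors that
represent a point of `S`. -/
def coneOver (S : Set (ℙ E V)) : Set V :=
  {v | ∃ hv : v ≠ 0, Projectivization.mk E v hv ∈ S}

/-- The affine coordinates of the points of `S` other than `[u]`, where `[u]`, `[w]` and `[u + w]`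
have coordinates `∞`, `0` and `1`. -/
def affineCoords (S : Set (ℙ E V)) (u w : V) : Set E :=
  {x | x • u + w ∈ coneOver S}

variable {S : Set (ℙ E V)} {u v w : V}

theorem rep_mem_coneOver {p : ℙ E V} (hp : p ∈ S) : p.rep ∈ coneOver S :=
  ⟨p.rep_nonzero, by rwa [p.mk_rep]⟩

theorem smul_mem_coneOver_iff {c : E} (hc : c ≠ 0) : c • v ∈ coneOver S ↔ v ∈ coneOver S := by
  have mk_smul (hcv : c • v ≠ 0) (hv : v ≠ 0) :
      Projectivization.mk E (c • v) hcv = Projectivization.mk E v hv :=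
    (Projectivization.mk_eq_mk_iff' ..).2 ⟨c, rfl⟩
  constructor
  · rintro ⟨hcv, hmem⟩
    have hv := right_ne_zero_of_smul hcv
    exact ⟨hv, mk_smul hcv hv ▸ hmem⟩
  · rintro ⟨hv, hmem⟩
    exact ⟨smul_ne_zero hc hv, (mk_smul _ hv).symm ▸ hmem⟩

theorem mk_ne_mk_of_linearIndependent (huw : LinearIndependent E ![u, w]) (hu : u ≠ 0)
    (hw : w ≠ 0) : Projectivization.mk E u hu ≠ Projectivization.mk E w hw :=
  (Projectivization.independent_pair_iff_ne _ _).1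
    ((Projectivization.independent_mk_iff_LinearIndependent hu hw).2 huw)

theorem smul_add_ne_zero (huw : LinearIndependent E ![u, w]) (x : E) : x • u + w ≠ 0 := by
  intro h
  simpa using huw.eq_zero_of_pair (s := x) (t := 1) (by rwa [one_smul])

theorem exists_smul_add_smul_eq (hV : finrank E V = 2) (huw : LinearIndependent E ![u, w])
    (v : V) : ∃ c d : E, c • u + d • w = v := by
  have hspan := huw.span_eq_top_of_card_eq_finrank (by simp [hV])
  rw [Matrix.range_cons_cons_empty] at hspan
  exact Submodule.mem_span_pair.1 (hspan ▸ Submodule.mem_top)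

theorem zero_mem_affineCoords (hw : w ∈ coneOver S) : 0 ∈ affineCoords S u w := by
  simpa [affineCoords] using hw

theorem one_mem_affineCoords (huw : u + w ∈ coneOver S) : 1 ∈ affineCoords S u w := by
  simpa [affineCoords] using huw

theorem mem_affineCoords_iff_inv_mem (hu : u ∈ coneOver S) (hw : w ∈ coneOver S) (x : E) :
    x ∈ affineCoords S u w ↔ x⁻¹ ∈ affineCoords S w u := by
  rcases eq_or_ne x 0 with rfl | hx
  · simp [zero_mem_affineCoords, hu, hw]
  · have hswap : x • u + w = x • (x⁻¹ • w + u) := by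
      rw [smul_add, smul_inv_smul₀ hx, add_comm]
    rw [affineCoords, Set.mem_ofPred_eq, hswap, smul_mem_coneOver_iff hx]
    rfl

theorem finite_affineCoords (huw : LinearIndependent E ![u, w]) (hS : S.Finite) :
    (affineCoords S u w).Finite := by
  let point (x : E) : ℙ E V := .mk E (x • u + w) (smul_add_ne_zero huw x)
  have point_injective : Function.Injective point := by
    intro x y hxy
    obtain ⟨a, ha⟩ := (Projectivization.mk_eq_mk_iff' ..).1 hxy
    have hcoord : a * y = x ∧ a = 1 := huw.eq_of_pair (by simpa [mul_smul, smul_add] using ha)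
    rw [← hcoord.1, hcoord.2, one_mul]
  exact (hS.preimage point_injective.injOn).subset fun _ hx => hx.2

theorem exists_frame (hV : finrank E V = 2) (hS : 3 ≤ S.encard) :
    ∃ u w : V, LinearIndependent E ![u, w] ∧
      u ∈ coneOver S ∧ w ∈ coneOver S ∧ u + w ∈ coneOver S := by
  obtain ⟨T, hTS, hT⟩ := Set.exists_subset_encard_eq hS
  obtain ⟨p₁, p₂, p₃, h₁₂, h₁₃, h₂₃, rfl⟩ := Set.encard_eq_three.1 hT
  obtain ⟨⟨h₁, h₂⟩, h₃⟩ : (p₁ ∈ S ∧ p₂ ∈ S) ∧ p₃ ∈ S := by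
    simpa [Set.insert_subset_iff, and_assoc] using hTS
  have hrep := Projectivization.linearIndependent_pair_iff_ne.2 h₁₂
  obtain ⟨c, d, hcd⟩ := exists_smul_add_smul_eq hV hrep p₃.rep
  have hc : c ≠ 0 := by
    rintro rfl
    refine (LinearIndependent.pair_iff' p₂.rep_nonzero).1
      (Projectivization.linearIndependent_pair_iff_ne.2 h₂₃) d (by simpa using hcd)
  have hd : d ≠ 0 := by
    rintro rfl
    refine (LinearIndependent.pair_iff' p₁.rep_nonzero).1
      (Projectivization.linearIndependent_pair_iff_ne.2 h₁₃) c (by simpa using hcd)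
  exact ⟨c • p₁.rep, d • p₂.rep,
    (LinearIndependent.pair_smul_smul_iff hc.isUnit hd.isUnit).2 hrep,
    (smul_mem_coneOver_iff hc).2 (rep_mem_coneOver h₁),
    (smul_mem_coneOver_iff hd).2 (rep_mem_coneOver h₂), hcd ▸ rep_mem_coneOver h₃⟩

theorem isSublineOver_of_affineCoords_eq (hV : finrank E V = 2) {K : Subfield E}
    (huw : LinearIndependent E ![u, w]) (hu : u ∈ coneOver S) (hK : affineCoords S u w = K) :
    IsSublineOver K S := by
  have mem_coneOver_iff {c d : E} (hd : d ≠ 0) : c • u + d • w ∈ coneOver S ↔ c / d ∈ K := by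
    rw [← SetLike.mem_coe, ← hK, affineCoords, Set.mem_ofPred_eq,
      ← smul_mem_coneOver_iff (v := (c / d) • u + w) hd, smul_add, smul_smul, mul_div_cancel₀ c hd]
  refine ⟨u, w, huw, Set.ext fun p => ⟨fun hp => ?_, ?_⟩⟩
  · obtain ⟨c, d, hcd⟩ := exists_smul_add_smul_eq hV huw p.rep
    rcases eq_or_ne d 0 with rfl | hd
    · refine ⟨1, K.one_mem, 0, K.zero_mem, by simpa using hu.1, ?_⟩
      rw [← p.mk_rep, Projectivization.mk_eq_mk_iff']
      exact ⟨c, by simpa using hcd⟩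
    · refine ⟨c / d, (mem_coneOver_iff hd).1 (hcd ▸ rep_mem_coneOver hp), 1, K.one_mem,
        by simpa using smul_add_ne_zero huw (c / d), ?_⟩
      rw [← p.mk_rep, Projectivization.mk_eq_mk_iff']
      exact ⟨d, by rw [← hcd, smul_add, smul_smul, mul_div_cancel₀ c hd, one_smul]⟩
  · rintro ⟨c, hc, d, hd, hx, rfl⟩
    suffices c • u + d • w ∈ coneOver S from this.2
    rcases eq_or_ne d 0 with rfl | hd0
    · have hc0 : c ≠ 0 := by
        rintro rfl
        simp at hx
      simpa using (smul_mem_coneOver_iff hc0).2 hu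
    · exact (mem_coneOver_iff hd0).2 (K.div_mem hc hd)

namespace IsSublineClosed

variable {F : Subfield E}

theorem smul_add_mem_coneOver (hclosed : IsSublineClosed F S) (huw : LinearIndependent E ![u, w])
    (hu : u ∈ coneOver S) (hw : w ∈ coneOver S) (hadd : u + w ∈ coneOver S) (t : F) :
    (t : E) • u + w ∈ coneOver S := by
  have hu_add : LinearIndependent E ![u, u + w] := LinearIndependent.pair_add_right_iff.2 huw
  have hw_add : LinearIndependent E ![w, u + w] := by
    rw [add_comm]
    exact LinearIndependent.pair_add_right_iff.2 (LinearIndependent.pair_symm_iff.1 huw)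
  refine ⟨smul_add_ne_zero huw _, hclosed _ _ _ hu.2 hw.2 hadd.2
    (mk_ne_mk_of_linearIndependent huw _ _) (mk_ne_mk_of_linearIndependent hu_add _ _)
    (mk_ne_mk_of_linearIndependent hw_add _ _) _ ⟨u, w, huw, rfl⟩ ?_ ?_ ?_ ?_⟩
  · exact ⟨1, F.one_mem, 0, F.zero_mem, by simpa using hu.1, by simp⟩
  · exact ⟨0, F.zero_mem, 1, F.one_mem, by simpa using hw.1, by simp⟩
  · exact ⟨1, F.one_mem, 1, F.one_mem, by simpa using hadd.1, by simp⟩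
  · exact ⟨t, t.2, 1, F.one_mem, by simpa using smul_add_ne_zero huw (t : E), by simp⟩

theorem lineMap_mem_affineCoords (hclosed : IsSublineClosed F S)
    (huw : LinearIndependent E ![u, w]) (hu : u ∈ coneOver S) {a b : E}
    (ha : a ∈ affineCoords S u w) (hb : b ∈ affineCoords S u w) (t : F) :
    AffineMap.lineMap a b t ∈ affineCoords S u w := by
  rcases eq_or_ne a b with rfl | hab
  · simpa using ha
  have hba : b - a ≠ 0 := sub_ne_zero.2 hab.symm
  have hframe : LinearIndependent E ![(b - a) • u, a • u + w] := by
    simpa using (LinearIndependent.pair_smul_smul_iff hba.isUnit isUnit_one).2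
      ((LinearIndependent.pair_add_smul_right_iff (c := a)).2 huw)
  have hb' : (b - a) • u + (a • u + w) ∈ coneOver S := by
    rwa [← add_assoc, ← add_smul, sub_add_cancel]
  have hmem := hclosed.smul_add_mem_coneOver hframe ((smul_mem_coneOver_iff hba).2 hu) ha hb' t
  rwa [← add_assoc, smul_smul, ← add_smul] at hmem

theorem exists_submodule_coe_eq_affineCoords (hclosed : IsSublineClosed F S)
    (hF : 3 ≤ ENat.card F) (huw : LinearIndependent E ![u, w]) (hu : u ∈ coneOver S)
    (hw : w ∈ coneOver S) : ∃ A : Submodule F E, (A : Set E) = affineCoords S u w :=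
  exists_submodule_coe_eq_of_lineMap_mem hF (zero_mem_affineCoords hw)
    fun _ ha _ hb t => hclosed.lineMap_mem_affineCoords huw hu ha hb t

end IsSublineClosed

end ProjectiveLine

section FiniteSubfield

theorem pow_natCard_eq_self_iff_mem {E : Type*} [Field E] {K : Subfield E} [Finite K] {x : E} :
    x ^ Nat.card K = x ↔ x ∈ K := by
  constructor
  · intro hx
    have hroot : ((.X ^ Nat.card K - .X : Polynomial K).map K.subtype).IsRoot x := by simp [hx]
    simpa using Polynomial.splits_X_pow_nat_card_sub_X.mem_range_of_isRoot
      (FiniteField.X_pow_card_sub_X_ne_zero K Finite.one_lt_card) hroot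
  · intro hx
    have : Fintype K := .ofFinite K
    rw [Nat.card_eq_fintype_card]
    exact congrArg Subtype.val (FiniteField.pow_card (⟨x, hx⟩ : K))

theorem exists_subfield_natCard_eq_and_finrank_eq {E : Type*} [Field E] [Finite E] {q h : ℕ}
    (hq : IsPrimePow q) (hcard : Nat.card E = q ^ h) :
    ∃ F : Subfield E, Nat.card F = q ∧ finrank F E = h := by
  obtain ⟨p, n, hp, hn, rfl⟩ := (isPrimePow_nat_iff _).1 hq
  have : Fact p.Prime := ⟨hp⟩
  have : Fintype E := .ofFinite E
  have : CharP E p :=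
    charP_of_card_eq_prime_pow (by rw [← Nat.card_eq_fintype_card, hcard, ← pow_mul])
  let : Algebra (ZMod p) E := ZMod.algebra E p
  have hE : finrank (ZMod p) E = n * h := Nat.pow_right_injective hp.two_le <|
    show p ^ finrank (ZMod p) E = p ^ (n * h) by
      rw [FiniteField.pow_finrank_eq_natCard, hcard, pow_mul]
  obtain ⟨f⟩ : Nonempty (GaloisField p n →ₐ[ZMod p] E) :=
    FiniteField.nonempty_algHom_of_finrank_dvd
      (by rw [GaloisField.finrank p hn.ne', hE]; exact dvd_mul_right n h)
  have hF : Nat.card f.toRingHom.fieldRange = p ^ n := by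
    rw [← GaloisField.card p n hn.ne']
    exact Nat.card_range_of_injective f.toRingHom.injective
  refine ⟨f.toRingHom.fieldRange, hF, Nat.pow_right_injective hq.two_le ?_⟩
  rw [natCard_eq_pow_finrank (K := f.toRingHom.fieldRange), hF] at hcard
  exact hcard

theorem isSubline_natCard_iff {E : Type} [Field E] {K : Subfield E} [Finite K]
    {T : Set (ℙ E (Fin 2 → E))} : IsSubline (Nat.card K) T ↔ IsSublineOver K T := by
  simp only [IsSubline, IsSublineOver, pow_natCard_eq_self_iff_mem, exists_and_left]

theorem isSubline_pow_finrank_iff {E : Type} [Field E] {F : Subfield E}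
    {K : IntermediateField F E} [Finite K] {T : Set (ℙ E (Fin 2 → E))} :
    IsSubline (Nat.card F ^ finrank F K) T ↔ IsSublineOver K.toSubfield T := by
  rw [← natCard_eq_pow_finrank]
  exact isSubline_natCard_iff (K := K.toSubfield)

end FiniteSubfield

theorem stmt16_general {E V : Type*} [Field E] [AddCommGroup V] [Module E V]
    (hV : finrank E V = 2) (F : Subfield E) (hF : 3 ≤ ENat.card F) (S : Set (ℙ E V))
    (hS : 3 ≤ S.encard) (hfin : (2 : E) ≠ 0 ∨ S.Finite) (hclosed : IsSublineClosed F S) :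
    ∃ K : IntermediateField F E, IsSublineOver K.toSubfield S := by
  obtain ⟨u, w, huw, hu, hw, hadd⟩ := exists_frame hV hS
  obtain ⟨A, hA⟩ := hclosed.exists_submodule_coe_eq_affineCoords hF huw hu hw
  obtain ⟨B, hB⟩ := hclosed.exists_submodule_coe_eq_affineCoords hF
    (LinearIndependent.pair_symm_iff.1 huw) hw hu
  have hAB (x : E) : x ∈ A ↔ x⁻¹ ∈ B := by
    simpa only [← hA, ← hB, SetLike.mem_coe] using mem_affineCoords_iff_inv_mem hu hw x
  have one_mem : 1 ∈ A := hA.ge (one_mem_affineCoords hadd)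
  obtain ⟨K, hK⟩ := exists_intermediateField_coe_eq_of_mem_iff_inv_mem hAB one_mem
    (hfin.imp_right fun h => hA ▸ finite_affineCoords huw h)
  exact ⟨K, isSublineOver_of_affineCoords_eq hV huw hu (hA.symm.trans hK.symm)⟩

/-- **Rottey–Van de Voorde.** Assume `q > 2`.  If `S` is a set of at
least three points of `PG(1, q^h)` such that for any three distinct points of `S` the
unique `q`-order subline through them is entirely contained in `S`, then `S` is a
`q^r`-order subline of `PG(1, q^h)` for some divisor `r` of `h`. -/
theorem stmt16 (q h : ℕ) (hq : IsPrimePow q) (hq2 : 2 < q) (hh : 1 ≤ h)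
    (E : Type) [Field E] [Fintype E] (hcard : Fintype.card E = q ^ h)
    (S : Set (Projectivization E (Fin 2 → E)))
    (hS : 3 ≤ S.ncard)
    (hclosed : ∀ p₁ p₂ p₃, p₁ ∈ S → p₂ ∈ S → p₃ ∈ S →
      p₁ ≠ p₂ → p₁ ≠ p₃ → p₂ ≠ p₃ →
      ∀ T, IsSubline q T → p₁ ∈ T → p₂ ∈ T → p₃ ∈ T → T ⊆ S) :
    ∃ r : ℕ, r ∣ h ∧ IsSubline (q ^ r) S := by
  rw [← Nat.card_eq_fintype_card] at hcard
  obtain ⟨F, rfl, rfl⟩ := exists_subfield_natCard_eq_and_finrank_eq hq hcard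
  have hF : 3 ≤ ENat.card F := by
    rw [ENat.card_eq_coe_natCard]
    exact_mod_cast hq2
  have hS' : 3 ≤ S.encard :=
    (Nat.cast_le.2 hS).trans S.ncard_le_encard
  have hclosed' : IsSublineClosed F S := by simpa only [IsSublineClosed, ← isSubline_natCard_iff]
  obtain ⟨K, hK⟩ := stmt16_general (by simp) F hF S hS' (.inr S.toFinite) hclosed'
  exact ⟨finrank F K, finrank_dvd_finrank_right F K E, isSubline_pow_finrank_iff.2 hK⟩
end
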